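/- arXiv:1301.0727 — 3 statements merged into one kernel-verified Lean document; each statement's English description precedes it below -/
import Mathlib

section
/- Fix a ∈ ℝ. Let τ* ∈ ℝ and let (Φ, W, Ψ, θ) be a solution of system (D) defined on (τ*, 0] with Φ(τ) > 0 and θ(τ) ∈ (−π/2, π/2) for all τ ∈ (τ*, 0], and suppose Φ(τ) → 0 as τ → τ*⁺. Set x = (Φ(0), W(0), Ψ(0), θ(0)). Then there exists δ > 0 such that for every y = (Φ̃₀, W̃₀, Ψ̃₀, θ̃₀) ∈ ℝ⁴ with |y − x| < δ, Φ̃₀ > 0 and θ̃₀ ∈ (−π/2, π/2), there exist τ̃* ∈ ℝ with τ̃* < 0 and a solution (Φ̃, W̃, Ψ̃, θ̃) of system (D) on (τ̃*, 0] with (Φ̃, W̃, Ψ̃, θ̃)(0) = y, Φ̃ > 0 on (τ̃*, 0], and Φ̃(τ) → 0 as τ → τ̃*⁺. -/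
open Filter Set

/-- The right-hand side of the `Ψ` equation in system (D). -/
noncomputable def dPsi (a Φ W Ψ θ : ℝ) : ℝ :=
  1 / Φ ^ 3 - 1 - (a - 1) * Real.cos θ ^ 2 -
    (((16 / 3) * Real.sin θ - (224 / 27) * Real.sin θ ^ 3) * Real.cos θ ^ ((17 : ℝ) / 3) * Φ
      + ((208 / 81) * Real.sin θ ^ 2 - 10 / 9) * Real.cos θ ^ ((34 : ℝ) / 9) * W
      + (2 / 3) * Real.sin θ * Real.cos θ ^ ((17 : ℝ) / 9) * Ψ)

/-- `(Φ, W, Ψ, θ)` is a solution of system (D) on the set `s`. -/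
noncomputable def SolDOn (a : ℝ) (s : Set ℝ) (Φ W Ψ θ : ℝ → ℝ) : Prop :=
  ∀ τ ∈ s,
    HasDerivWithinAt Φ (W τ) s τ ∧
    HasDerivWithinAt W (Ψ τ) s τ ∧
    HasDerivWithinAt Ψ (dPsi a (Φ τ) (W τ) (Ψ τ) (θ τ)) s τ ∧
    HasDerivWithinAt θ (Real.cos (θ τ) ^ ((26 : ℝ) / 9)) s τ

/-!
With `ξ = tan θ` and `h = Φ (1 + ξ²)^(-1/3)`, system (D) becomes the profile equation
`h''' = 1 / h ^ 3 - a - ξ ^ 2` for `h` as a function of `ξ`, run with the clock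
`dξ/dτ = (1 + ξ²)^(-4/9)`. Reverse time. If `h` tends to zero, then `1 / h ^ 3` drives `h''` below
zero and `h` decreases at a definite rate, so the solution enters an open region of small `h`,
definite decrease and `h'' < 0`. A solution starting in that region touches down: its decrease never
slows, so it cannot exist for a unit of time, and it can only break down by `h → 0`. Continuous
dependence on the data up to the entrance time does the rest.
-/

open scoped Topology NNReal

/-! ### Integral curves of an autonomous field on an open set -/

section ODE

variable {E : Type*} [NormedAddCommGroup E] [NormedSpace ℝ E]

/-- `γ` is an integral curve on `s` of the autonomous field `F` that stays in the set `U` on which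
`F` is regular. -/
structure IsIntegralCurveIn (F : E → E) (U : Set E) (γ : ℝ → E) (s : Set ℝ) : Prop where
  isIntegralCurveOn : IsIntegralCurveOn γ (fun _ ↦ F) s
  mapsTo : MapsTo γ s U

section

variable {F G : E → E} {U V : Set E} {γ : ℝ → E} {s s' : Set ℝ}

lemma IsIntegralCurveIn.mono (h : IsIntegralCurveIn F U γ s) (hs : s' ⊆ s) :
    IsIntegralCurveIn F U γ s' :=
  ⟨h.isIntegralCurveOn.mono hs, h.mapsTo.mono_left hs⟩

lemma IsIntegralCurveIn.mono_right (h : IsIntegralCurveIn F U γ s) (hUV : U ⊆ V) :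
    IsIntegralCurveIn F V γ s :=
  ⟨h.isIntegralCurveOn, h.mapsTo.mono_right hUV⟩

lemma IsIntegralCurveIn.isIntegralCurveOn_of_eqOn (h : IsIntegralCurveIn F U γ s)
    (hFG : EqOn G F U) : IsIntegralCurveOn γ (fun _ ↦ G) s := fun t ht ↦ by
  simpa only [hFG (h.mapsTo ht)] using h.isIntegralCurveOn t ht

lemma isIntegralCurveIn_of_eqOn (h : IsIntegralCurveOn γ (fun _ ↦ G) s) (hs : MapsTo γ s U)
    (hFG : EqOn G F U) : IsIntegralCurveIn F U γ s :=
  ⟨(⟨h, hs⟩ : IsIntegralCurveIn G U γ s).isIntegralCurveOn_of_eqOn hFG.symm, hs⟩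

lemma isIntegralCurveOn_singleton (v : ℝ → E → E) (t : ℝ) : IsIntegralCurveOn γ v {t} := by
  rintro _ rfl
  exact HasFDerivWithinAt.of_subsingleton subsingleton_singleton

lemma IsIntegralCurveIn.congr {γ' : ℝ → E} (h : IsIntegralCurveIn F U γ s) (he : EqOn γ' γ s) :
    IsIntegralCurveIn F U γ' s :=
  ⟨fun t ht ↦ by simpa only [he ht] using (h.isIntegralCurveOn t ht).congr he (he ht),
    h.mapsTo.congr he.symm⟩

lemma IsIntegralCurveIn.comp_neg (h : IsIntegralCurveIn F U γ s) :
    IsIntegralCurveIn (-F) U (fun t ↦ γ (-t)) (-s) := by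
  refine ⟨fun t ht ↦ ?_, fun t ht ↦ h.mapsTo ht⟩
  have hneg : MapsTo Neg.neg (-s) s := fun x hx ↦ hx
  have := (h.isIntegralCurveOn (-t) ht).scomp t (hasDerivAt_neg t).hasDerivWithinAt hneg
  rwa [neg_one_smul] at this

lemma IsIntegralCurveIn.comp_sub_const (h : IsIntegralCurveIn F U γ s) (d : ℝ) :
    IsIntegralCurveIn F U (fun t ↦ γ (t - d)) ((fun t ↦ t - d) ⁻¹' s) := by
  refine ⟨fun t ht ↦ ?_, fun t ht ↦ h.mapsTo ht⟩
  simpa using! (h.isIntegralCurveOn (t - d) ht).scomp t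
    ((hasDerivAt_id t).sub_const d).hasDerivWithinAt (mapsTo_preimage _ s)

lemma IsIntegralCurveIn.union (h : IsIntegralCurveIn F U γ s) (h' : IsIntegralCurveIn F U γ s')
    (hs : closure s ∩ s' ⊆ s) (hs' : closure s' ∩ s ⊆ s') :
    IsIntegralCurveIn F U γ (s ∪ s') := by
  refine ⟨fun t ht ↦ ?_, h.mapsTo.union h'.mapsTo⟩
  have key {r r' : Set ℝ} (hr : IsIntegralCurveIn F U γ r) (hr' : closure r ∩ r' ⊆ r)
      (ht : t ∈ r ∪ r') : HasDerivWithinAt γ (F (γ t)) r t := by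
    by_cases htr : t ∈ closure r
    · exact hr.isIntegralCurveOn t (ht.elim id fun h ↦ hr' ⟨htr, h⟩)
    · exact HasFDerivWithinAt.of_notMem_closure htr
  exact (key h hs ht).union (key h' hs' ht.symm)

lemma IsIntegralCurveIn.concat {γ' : ℝ → E} {a b c : ℝ} (hab : a ≤ b) (hbc : b < c)
    (h : IsIntegralCurveIn F U γ (Icc a b)) (h' : IsIntegralCurveIn F U γ' (Ico b c))
    (hb : γ b = γ' b) :
    IsIntegralCurveIn F U (fun t ↦ if t ≤ b then γ t else γ' t) (Ico a c) := by
  rw [← Icc_union_Ico_eq_Ico hab hbc]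
  refine (h.congr fun t ht ↦ if_pos ht.2).union (h'.congr fun t ht ↦ ?_) ?_ ?_
  · rcases ht.1.eq_or_lt with rfl | hlt
    · exact (if_pos le_rfl).trans hb
    · exact if_neg hlt.not_ge
  · rw [closure_Icc]
    exact inter_subset_left
  · rintro t ⟨ht, ht'⟩
    rw [closure_Ico hbc.ne] at ht
    exact ⟨ht.1, ht'.2.trans_lt hbc⟩

end

/-! #### Existence, uniqueness and continuous dependence -/

lemma exists_contDiff_hasCompactSupport_eventuallyEq [FiniteDimensional ℝ E] {F : E → E}
    {U C : Set E} (hU : IsOpen U) (hF : ContDiffOn ℝ 1 F U) (hC : IsCompact C) (hCU : C ⊆ U) :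
    ∃ G : E → E, ContDiff ℝ 1 G ∧ HasCompactSupport G ∧ ∀ᶠ z in 𝓝ˢ C, G z = F z := by
  obtain ⟨C', hC', hCC', hC'U⟩ := exists_compact_between hC hU hCU
  obtain ⟨χ, hχ_one, hχ_zero, -⟩ := exists_contMDiffMap_one_nhds_of_subset_interior
    (I := modelWithCornersSelf ℝ E) (n := 1) hC.isClosed hCC'
  have hG_zero : ∀ z ∉ C', χ z • F z = 0 := fun z hz ↦ by rw [hχ_zero z hz, zero_smul]
  refine ⟨fun z ↦ χ z • F z, ?_, .intro hC' hG_zero, ?_⟩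
  · refine contDiff_of_contDiffOn_union_of_isOpen (χ.contMDiff.contDiff.contDiffOn.smul hF)
      ((contDiffOn_const (c := (0 : E))).congr hG_zero) ?_ hU hC'.isClosed.isOpen_compl
    exact eq_univ_of_univ_subset <| (union_compl_self C').ge.trans <| union_subset_union_left _ hC'U
  · filter_upwards [hχ_one] with z hz
    rw [hz, one_smul]

lemma exists_lipschitzWith_bounded_eventuallyEq [FiniteDimensional ℝ E] {F : E → E}
    {U C : Set E} (hU : IsOpen U) (hF : ContDiffOn ℝ 1 F U) (hC : IsCompact C) (hCU : C ⊆ U) :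
    ∃ (G : E → E) (K L : ℝ≥0), LipschitzWith K G ∧ (∀ z, ‖G z‖ ≤ L) ∧
      ∀ᶠ z in 𝓝ˢ C, G z = F z := by
  obtain ⟨G, hG, hGc, hGF⟩ := exists_contDiff_hasCompactSupport_eventuallyEq hU hF hC hCU
  obtain ⟨K, hK⟩ := hG.lipschitzWith_of_hasCompactSupport hGc one_ne_zero
  obtain ⟨L, hL⟩ := hGc.exists_bound_of_continuous hG.continuous
  exact ⟨G, K, L.toNNReal, hK, fun z ↦ (hL z).trans (Real.le_coe_toNNReal L), hGF⟩

lemma exists_isIntegralCurveOn_of_lipschitzWith [CompleteSpace E] {G : E → E} {K L : ℝ≥0}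
    (hK : LipschitzWith K G) (hL : ∀ z, ‖G z‖ ≤ L) {T : ℝ} (hT : 0 ≤ T) (z : E) :
    ∃ γ : ℝ → E, γ 0 = z ∧ IsIntegralCurveOn γ (fun _ ↦ G) (Icc 0 T) := by
  have hpl : IsPicardLindelof (fun _ ↦ G) (⟨0, le_rfl, hT⟩ : Icc 0 T) z (L * ⟨T, hT⟩) 0 L K := by
    refine ⟨fun _ _ ↦ hK.lipschitzOnWith, fun _ _ ↦ continuousOn_const, fun _ _ x _ ↦ hL x, ?_⟩
    simp only [sub_zero, max_eq_left hT, sub_self, NNReal.coe_zero]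
    exact (NNReal.coe_mul L ⟨T, hT⟩).ge
  exact hpl.exists_eq_forall_mem_Icc_hasDerivWithinAt₀

lemma dist_le_of_isIntegralCurveOn {G : E → E} {K : ℝ≥0} (hK : LipschitzWith K G)
    {γ γ' : ℝ → E} {a b : ℝ} (h : IsIntegralCurveOn γ (fun _ ↦ G) (Icc a b))
    (h' : IsIntegralCurveOn γ' (fun _ ↦ G) (Icc a b)) {t : ℝ} (ht : t ∈ Icc a b) :
    dist (γ t) (γ' t) ≤ dist (γ a) (γ' a) * Real.exp (K * (t - a)) := by
  have right {γ : ℝ → E} (h : IsIntegralCurveOn γ (fun _ ↦ G) (Icc a b)) :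
      ∀ t ∈ Ico a b, HasDerivWithinAt γ (G (γ t)) (Ici t) t := fun t ht ↦
    (h t (Ico_subset_Icc_self ht)).mono_of_mem_nhdsWithin (Icc_mem_nhdsGE_of_mem ht)
  exact dist_le_of_trajectories_ODE (fun _ ↦ hK) h.continuousOn (right h) h'.continuousOn
    (right h') le_rfl t ht

lemma eqOn_of_isIntegralCurveOn {G : E → E} {K : ℝ≥0} (hK : LipschitzWith K G)
    {γ γ' : ℝ → E} {a b : ℝ} (h : IsIntegralCurveOn γ (fun _ ↦ G) (Icc a b))
    (h' : IsIntegralCurveOn γ' (fun _ ↦ G) (Icc a b)) (ha : γ a = γ' a) :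
    EqOn γ γ' (Icc a b) := fun t ht ↦ by
  simpa [ha] using dist_le_of_isIntegralCurveOn hK h h' ht

section FiniteDimensional

variable [FiniteDimensional ℝ E] {F : E → E} {U : Set E}

lemma IsIntegralCurveIn.eqOn (hU : IsOpen U) (hF : ContDiffOn ℝ 1 F U) {γ γ' : ℝ → E} {a b : ℝ}
    (h : IsIntegralCurveIn F U γ (Icc a b)) (h' : IsIntegralCurveIn F U γ' (Icc a b))
    (ha : γ a = γ' a) : EqOn γ γ' (Icc a b) := by
  have hC : IsCompact (γ '' Icc a b ∪ γ' '' Icc a b) :=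
    (isCompact_Icc.image_of_continuousOn h.isIntegralCurveOn.continuousOn).union
      (isCompact_Icc.image_of_continuousOn h'.isIntegralCurveOn.continuousOn)
  obtain ⟨G, K, -, hK, -, hGF⟩ := exists_lipschitzWith_bounded_eventuallyEq hU hF hC
    (union_subset h.mapsTo.image_subset h'.mapsTo.image_subset)
  have hGF : EqOn G F (γ '' Icc a b ∪ γ' '' Icc a b) := fun z hz ↦ hGF.self_of_nhdsSet z hz
  refine eqOn_of_isIntegralCurveOn hK ?_ ?_ ha
  · exact (⟨h.isIntegralCurveOn, fun t ht ↦ .inl (mem_image_of_mem γ ht)⟩ :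
      IsIntegralCurveIn F _ γ _).isIntegralCurveOn_of_eqOn hGF
  · exact (⟨h'.isIntegralCurveOn, fun t ht ↦ .inr (mem_image_of_mem γ' ht)⟩ :
      IsIntegralCurveIn F _ γ' _).isIntegralCurveOn_of_eqOn hGF

lemma IsIntegralCurveIn.eventually_exists_mem (hU : IsOpen U) (hF : ContDiffOn ℝ 1 F U)
    {γ : ℝ → E} {T : ℝ} (hT : 0 ≤ T) (h : IsIntegralCurveIn F U γ (Icc 0 T)) {O : Set E}
    (hO : O ∈ 𝓝 (γ T)) :
    ∀ᶠ y in 𝓝 (γ 0), ∃ γ' : ℝ → E, γ' 0 = y ∧ IsIntegralCurveIn F U γ' (Icc 0 T) ∧ γ' T ∈ O := by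
  have hC : IsCompact (γ '' Icc 0 T) :=
    isCompact_Icc.image_of_continuousOn h.isIntegralCurveOn.continuousOn
  obtain ⟨G, K, L, hK, hL, hGF⟩ :=
    exists_lipschitzWith_bounded_eventuallyEq hU hF hC h.mapsTo.image_subset
  obtain ⟨V, hV, hCV, hVGF⟩ := mem_nhdsSet_iff_exists.1
    (hGF.and (hU.mem_nhdsSet.2 h.mapsTo.image_subset))
  obtain ⟨ρ, hρ, hρV⟩ := hC.exists_thickening_subset_open hV hCV
  obtain ⟨ε, hε, hεO⟩ := Metric.mem_nhds_iff.1 hO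
  have hγG : IsIntegralCurveOn γ (fun _ ↦ G) (Icc 0 T) :=
    (⟨h.isIntegralCurveOn, (mapsTo_image γ _).mono_right hCV⟩ :
      IsIntegralCurveIn F V γ _).isIntegralCurveOn_of_eqOn fun z hz ↦ (hVGF hz).1
  have hsmall : ∀ᶠ y in 𝓝 (γ 0), dist y (γ 0) * Real.exp (K * T) < min ρ ε :=
    ContinuousAt.eventually_lt (by fun_prop) continuousAt_const (by simp [hρ, hε])
  filter_upwards [hsmall] with y hy
  obtain ⟨γ', h0, hγ'⟩ := exists_isIntegralCurveOn_of_lipschitzWith hK hL hT y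
  have hdist : ∀ t ∈ Icc 0 T, dist (γ' t) (γ t) < min ρ ε := fun t ht ↦ calc
    dist (γ' t) (γ t) ≤ dist (γ' 0) (γ 0) * Real.exp (K * (t - 0)) :=
      dist_le_of_isIntegralCurveOn hK hγ' hγG ht
    _ ≤ dist y (γ 0) * Real.exp (K * T) := by
      rw [h0, sub_zero]
      gcongr
      exact ht.2
    _ < min ρ ε := hy
  have hγ'V : MapsTo γ' (Icc 0 T) V := fun t ht ↦ hρV <| Metric.mem_thickening_iff.2
    ⟨γ t, mem_image_of_mem γ ht, (hdist t ht).trans_le (min_le_left _ _)⟩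
  exact ⟨γ', h0, (isIntegralCurveIn_of_eqOn hγ' hγ'V fun z hz ↦ (hVGF hz).1).mono_right
    fun z hz ↦ (hVGF hz).2,
    hεO <| (hdist T ⟨hT, le_rfl⟩).trans_le (min_le_right _ _)⟩

/-! #### Maximal integral curves -/

lemma IsIntegralCurveIn.exists_extension (hU : IsOpen U) (hF : ContDiffOn ℝ 1 F U) {C : Set E}
    (hC : IsCompact C) (hCU : C ⊆ U) {γ : ℝ → E} {σ : ℝ} (hσ : 0 ≤ σ)
    (h : IsIntegralCurveIn F C γ (Ico 0 σ)) (h0 : γ 0 ∈ C) :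
    ∃ T > σ, ∃ γ' : ℝ → E, γ' 0 = γ 0 ∧ IsIntegralCurveIn F U γ' (Icc 0 T) := by
  obtain ⟨G, K, L, hK, hL, hGF⟩ := exists_lipschitzWith_bounded_eventuallyEq hU hF hC hCU
  obtain ⟨V, hV, hCV, hVGF⟩ := mem_nhdsSet_iff_exists.1 (hGF.and (hU.mem_nhdsSet.2 hCU))
  obtain ⟨X, hX0, hX⟩ :=
    exists_isIntegralCurveOn_of_lipschitzWith hK hL (by positivity : 0 ≤ σ + 1) (γ 0)
  have hXC_Ico : MapsTo X (Ico 0 σ) C := fun t ht ↦ by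
    have hγt : IsIntegralCurveOn γ (fun _ ↦ G) (Icc 0 t) :=
      (h.mono (Icc_subset_Ico_right ht.2)).isIntegralCurveOn_of_eqOn fun z hz ↦ (hVGF (hCV hz)).1
    have hXt : IsIntegralCurveOn X (fun _ ↦ G) (Icc 0 t) :=
      hX.mono (Icc_subset_Icc_right (by linarith [ht.2]))
    rw [eqOn_of_isIntegralCurveOn hK hXt hγt hX0 ⟨ht.1, le_rfl⟩]
    exact h.mapsTo ht
  have hXσ : X σ ∈ C := by
    rcases hσ.eq_or_lt with rfl | hσ
    · rwa [hX0]
    · have hcl : σ ∈ closure (Ico 0 σ) := by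
        rw [closure_Ico hσ.ne]
        exact right_mem_Icc.2 hσ.le
      have hcont : ContinuousWithinAt X (Ico 0 σ) σ :=
        (hX.continuousWithinAt ⟨hσ.le, by linarith⟩).mono
          (Ico_subset_Icc_self.trans (Icc_subset_Icc_right (by linarith)))
      exact hC.isClosed.closure_subset (hcont.mem_closure hcl hXC_Ico)
  have hnear : ∀ᶠ t in 𝓝[≥] σ, t ≤ σ + 1 ∧ X t ∈ V := by
    have hIcc : Icc σ (σ + 1) ∈ 𝓝[≥] σ := Icc_mem_nhdsGE (by linarith)
    have hcont : ContinuousWithinAt X (Icc σ (σ + 1)) σ :=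
      (hX.continuousWithinAt ⟨hσ, by linarith⟩).mono (Icc_subset_Icc_left hσ)
    filter_upwards [hIcc, hcont.mono_of_mem_nhdsWithin hIcc (hV.mem_nhds (hCV hXσ))]
      with t ht htV using ⟨ht.2, htV⟩
  obtain ⟨T, hσT, hT⟩ := mem_nhdsGE_iff_exists_Icc_subset.1 hnear
  have hXV : MapsTo X (Icc 0 T) V := fun t ht ↦ by
    rcases lt_or_ge t σ with hlt | hge
    · exact hCV (hXC_Ico ⟨ht.1, hlt⟩)
    · exact (hT ⟨hge, ht.2⟩).2
  have hXT : IsIntegralCurveOn X (fun _ ↦ G) (Icc 0 T) :=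
    hX.mono (Icc_subset_Icc_right (hT ⟨hσT.le, le_rfl⟩).1)
  exact ⟨T, hσT, X, hX0, (isIntegralCurveIn_of_eqOn hXT hXV fun z hz ↦ (hVGF hz).1).mono_right
    fun z hz ↦ (hVGF hz).2⟩

lemma exists_isIntegralCurveIn_Ico (hU : IsOpen U) (hF : ContDiffOn ℝ 1 F U) {z : E} {σ : ℝ}
    (hσ : 0 < σ)
    (h : ∀ t ∈ Ico 0 σ, ∃ γ : ℝ → E, γ 0 = z ∧ IsIntegralCurveIn F U γ (Icc 0 t)) :
    ∃ γ : ℝ → E, γ 0 = z ∧ IsIntegralCurveIn F U γ (Ico 0 σ) := by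
  choose! Y hY0 hY using h
  have agree : ∀ t ∈ Ico 0 σ, EqOn (fun s ↦ Y s s) (Y t) (Icc 0 t) := fun t ht s hs ↦ by
    have hs' : s ∈ Ico 0 σ := ⟨hs.1, hs.2.trans_lt ht.2⟩
    exact (hY s hs').eqOn hU hF ((hY t ht).mono (Icc_subset_Icc_right hs.2))
      ((hY0 s hs').trans (hY0 t ht).symm) ⟨hs.1, le_rfl⟩
  have local_curve : ∀ s ∈ Ico 0 σ, ∃ t, s < t ∧
      IsIntegralCurveIn F U (fun s ↦ Y s s) (Icc 0 t) := fun s hs ↦ by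
    obtain ⟨t, hst, htσ⟩ := exists_between hs.2
    have ht : t ∈ Ico 0 σ := ⟨hs.1.trans hst.le, htσ⟩
    exact ⟨t, hst, (hY t ht).congr (agree t ht)⟩
  refine ⟨fun s ↦ Y s s, hY0 0 ⟨le_rfl, hσ⟩, fun s hs ↦ ?_, fun s hs ↦ ?_⟩ <;>
    obtain ⟨t, hst, ht⟩ := local_curve s hs
  · refine (ht.isIntegralCurveOn s ⟨hs.1, hst.le⟩).mono_of_mem_nhdsWithin ?_
    filter_upwards [self_mem_nhdsWithin, mem_nhdsWithin_of_mem_nhds (Iio_mem_nhds hst)]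
      with x hx hxt using ⟨hx.1, le_of_lt hxt⟩
  · exact ht.mapsTo ⟨hs.1, hst.le⟩

lemma exists_maximal_isIntegralCurveIn (hU : IsOpen U) (hF : ContDiffOn ℝ 1 F U) {z : E}
    (hz : z ∈ U) {T : ℝ}
    (hT : ¬∃ γ : ℝ → E, γ 0 = z ∧ IsIntegralCurveIn F U γ (Icc 0 T)) :
    ∃ σ, 0 < σ ∧ σ ≤ T ∧ ∃ γ : ℝ → E, γ 0 = z ∧ IsIntegralCurveIn F U γ (Ico 0 σ) ∧
      ∀ C, IsCompact C → C ⊆ U → ¬MapsTo γ (Ico 0 σ) C := by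
  set A : Set ℝ := {t | 0 ≤ t ∧ ∃ γ : ℝ → E, γ 0 = z ∧ IsIntegralCurveIn F U γ (Icc 0 t)}
  have lt_T : ∀ t ∈ A, t < T := by
    rintro t ⟨-, γ, h0, hγ⟩
    by_contra! hTt
    exact hT ⟨γ, h0, hγ.mono (Icc_subset_Icc_right hTt)⟩
  have zero_mem : (0 : ℝ) ∈ A := by
    refine ⟨le_rfl, fun _ ↦ z, rfl, ?_, fun _ _ ↦ hz⟩
    rw [Icc_self]
    exact isIntegralCurveOn_singleton _ 0
  have hbdd : BddAbove A := ⟨T, fun t ht ↦ (lt_T t ht).le⟩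
  have lt_sSup : ∀ t ∈ A, t < sSup A := by
    rintro t ⟨ht, γ, h0, hγ⟩
    have hC : IsCompact (γ '' Icc 0 t) :=
      isCompact_Icc.image_of_continuousOn hγ.isIntegralCurveOn.continuousOn
    have hγC : IsIntegralCurveIn F (γ '' Icc 0 t) γ (Ico 0 t) :=
      ⟨(hγ.mono Ico_subset_Icc_self).isIntegralCurveOn,
        (mapsTo_image γ _).mono_left Ico_subset_Icc_self⟩
    obtain ⟨t', htt', γ', h0', hγ'⟩ := hγC.exists_extension hU hF hC hγ.mapsTo.image_subset ht
      (mem_image_of_mem γ ⟨le_rfl, ht⟩)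
    exact htt'.trans_le (le_csSup hbdd ⟨ht.trans htt'.le, γ', h0'.trans h0, hγ'⟩)
  obtain ⟨γ, h0, hγ⟩ := exists_isIntegralCurveIn_Ico hU hF (lt_sSup 0 zero_mem) fun t ht ↦ by
    obtain ⟨t', ⟨-, γ, h0, hγ⟩, htt'⟩ := exists_lt_of_lt_csSup ⟨0, zero_mem⟩ ht.2
    exact ⟨γ, h0, hγ.mono (Icc_subset_Icc_right htt'.le)⟩
  refine ⟨sSup A, lt_sSup 0 zero_mem, csSup_le ⟨0, zero_mem⟩ fun t ht ↦ (lt_T t ht).le, γ, h0, hγ,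
    fun C hC hCU hγC ↦ ?_⟩
  obtain ⟨t, hlt, γ', h0', hγ'⟩ := IsIntegralCurveIn.exists_extension hU hF hC hCU
    (lt_sSup 0 zero_mem).le ⟨hγ.isIntegralCurveOn, hγC⟩ (hγC ⟨le_rfl, lt_sSup 0 zero_mem⟩)
  have htA : t ∈ A := ⟨(lt_sSup 0 zero_mem).le.trans hlt.le, γ', h0'.trans h0, hγ'⟩
  exact (lt_sSup t htA).not_gt hlt

end FiniteDimensional

end ODE

/-! ### Touchdown of profiles -/

lemma monotoneOn_of_forall_hasDerivWithinAt_nonneg {f f' : ℝ → ℝ} {S : Set ℝ} (hS : Convex ℝ S)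
    (hf : ∀ s ∈ S, HasDerivWithinAt f (f' s) S s) (hf' : ∀ s ∈ S, 0 ≤ f' s) : MonotoneOn f S :=
  monotoneOn_of_hasDerivWithinAt_nonneg hS (fun s hs ↦ (hf s hs).continuousWithinAt)
    (fun s hs ↦ (hf s (interior_subset hs)).mono interior_subset)
    fun s hs ↦ hf' s (interior_subset hs)

lemma antitoneOn_of_forall_hasDerivWithinAt_nonpos {f f' : ℝ → ℝ} {S : Set ℝ} (hS : Convex ℝ S)
    (hf : ∀ s ∈ S, HasDerivWithinAt f (f' s) S s) (hf' : ∀ s ∈ S, f' s ≤ 0) : AntitoneOn f S :=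
  antitoneOn_of_hasDerivWithinAt_nonpos hS (fun s hs ↦ (hf s hs).continuousWithinAt)
    (fun s hs ↦ (hf s (interior_subset hs)).mono interior_subset)
    fun s hs ↦ hf' s (interior_subset hs)

lemma abs_le_of_forall_hasDerivWithinAt_Ico {f f' : ℝ → ℝ} {c S B : ℝ}
    (hf : ∀ s ∈ Ico c S, HasDerivWithinAt f (f' s) (Ico c S) s)
    (hf' : ∀ s ∈ Ico c S, |f' s| ≤ B) {s : ℝ} (hs : s ∈ Ico c S) :
    |f s| ≤ |f c| + B * (S - c) := by
  have hc : c ∈ Ico c S := ⟨le_rfl, hs.1.trans_lt hs.2⟩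
  have hB : 0 ≤ B := (abs_nonneg _).trans (hf' c hc)
  calc |f s| ≤ |f c| + |f s - f c| := by simpa using abs_add_le (f c) (f s - f c)
    _ ≤ |f c| + B * |s - c| := add_le_add_right
      ((convex_Ico c S).norm_image_sub_le_of_norm_hasDerivWithin_le hf hf' hc hs) _
    _ ≤ |f c| + B * (S - c) := by
      rw [abs_of_nonneg (sub_nonneg.2 hs.1)]
      gcongr
      exact hs.2.le

lemma le_mul_sub_of_tendsto_zero {f f' : ℝ → ℝ} {c S B : ℝ}
    (hf : ∀ s ∈ Ico c S, HasDerivWithinAt f (f' s) (Ico c S) s)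
    (hf' : ∀ s ∈ Ico c S, -B ≤ f' s) (h0 : Tendsto f (𝓝[<] S) (𝓝 0)) {s : ℝ}
    (hs : s ∈ Ico c S) : f s ≤ B * (S - s) := by
  have hmono : MonotoneOn (fun s ↦ f s + B * s) (Ico c S) :=
    monotoneOn_of_forall_hasDerivWithinAt_nonneg (convex_Ico c S)
      (fun s hs ↦ (hf s hs).add ((hasDerivAt_id s).const_mul B).hasDerivWithinAt)
      fun s hs ↦ by linarith [hf' s hs]
  have hlim : Tendsto (fun s ↦ f s + B * s) (𝓝[<] S) (𝓝 (0 + B * S)) :=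
    h0.add ((continuous_const_mul B).continuousWithinAt.tendsto)
  have hle : f s + B * s ≤ 0 + B * S := ge_of_tendsto hlim <| by
    filter_upwards [Ico_mem_nhdsLT hs.2] with r hr
    exact hmono hs ⟨hs.1.trans hr.1, hr.2⟩ hr.1
  linarith

/-- A positive solution `h` of the profile equation `h''' = b - 1 / h ^ 3`, with first and second
derivatives `u` and `v`, run along a clock of speed `k`. -/
structure IsProfileOn (k b : ℝ → ℝ) (S : Set ℝ) (h u v : ℝ → ℝ) : Prop where
  pos : ∀ s ∈ S, 0 < h s
  height : ∀ s ∈ S, HasDerivWithinAt h (k s * u s) S s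
  slope : ∀ s ∈ S, HasDerivWithinAt u (k s * v s) S s
  curvature : ∀ s ∈ S, HasDerivWithinAt v (k s * (b s - 1 / h s ^ 3)) S s

namespace IsProfileOn

variable {k b h u v : ℝ → ℝ} {S S' : Set ℝ}

lemma mono (H : IsProfileOn k b S h u v) (hS : S' ⊆ S) : IsProfileOn k b S' h u v where
  pos s hs := H.pos s (hS hs)
  height s hs := (H.height s (hS hs)).mono hS
  slope s hs := (H.slope s (hS hs)).mono hS
  curvature s hs := (H.curvature s (hS hs)).mono hS

lemma antitoneOn_height (H : IsProfileOn k b S h u v) (hS : Convex ℝ S)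
    (hk : ∀ s ∈ S, 0 ≤ k s) (hu : ∀ s ∈ S, u s ≤ 0) : AntitoneOn h S :=
  antitoneOn_of_forall_hasDerivWithinAt_nonpos hS H.height
    fun s hs ↦ mul_nonpos_of_nonneg_of_nonpos (hk s hs) (hu s hs)

lemma antitoneOn_slope (H : IsProfileOn k b S h u v) (hS : Convex ℝ S)
    (hk : ∀ s ∈ S, 0 ≤ k s) (hv : ∀ s ∈ S, v s ≤ 0) : AntitoneOn u S :=
  antitoneOn_of_forall_hasDerivWithinAt_nonpos hS H.slope
    fun s hs ↦ mul_nonpos_of_nonneg_of_nonpos (hk s hs) (hv s hs)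

lemma antitoneOn_curvature (H : IsProfileOn k b S h u v) (hS : Convex ℝ S)
    (hk : ∀ s ∈ S, 0 ≤ k s) (hb : ∀ s ∈ S, h s ^ 3 * b s ≤ 1) : AntitoneOn v S :=
  antitoneOn_of_forall_hasDerivWithinAt_nonpos hS H.curvature fun s hs ↦
    mul_nonpos_of_nonneg_of_nonpos (hk s hs) <| sub_nonpos.2 <|
      (le_div_iff₀' (pow_pos (H.pos s hs) 3)).2 (hb s hs)

lemma continuousOn (H : IsProfileOn k b S h u v) : ContinuousOn (fun s ↦ (h s, u s, v s)) S :=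
  fun s hs ↦ (H.height s hs).continuousWithinAt.prodMk <|
    (H.slope s hs).continuousWithinAt.prodMk (H.curvature s hs).continuousWithinAt

section Trapping

variable {s₀ t M : ℝ}

lemma le_left_of_forall_trapped (H : IsProfileOn k b (Icc s₀ t) h u v)
    (hk : ∀ s ∈ Icc s₀ t, 0 ≤ k s) (hb : ∀ s ∈ Icc s₀ t, b s ≤ M)
    (hP : ∀ s ∈ Icc s₀ t, h s ^ 3 * M < 1 ∧ u s < 0 ∧ v s < 0) {s : ℝ} (hs : s ∈ Icc s₀ t) :
    (h s, u s, v s) ≤ (h s₀, u s₀, v s₀) := by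
  have hs₀ : s₀ ∈ Icc s₀ t := ⟨le_rfl, hs.1.trans hs.2⟩
  have hI : Convex ℝ (Icc s₀ t) := convex_Icc s₀ t
  refine ⟨H.antitoneOn_height hI hk (fun r hr ↦ (hP r hr).2.1.le) hs₀ hs hs.1,
    H.antitoneOn_slope hI hk (fun r hr ↦ (hP r hr).2.2.le) hs₀ hs hs.1,
    H.antitoneOn_curvature hI hk (fun r hr ↦ ?_) hs₀ hs hs.1⟩
  calc h r ^ 3 * b r ≤ h r ^ 3 * M :=
        mul_le_mul_of_nonneg_left (hb r hr) (pow_pos (H.pos r hr) 3).le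
    _ ≤ 1 := (hP r hr).1.le

lemma le_left_of_trapped (H : IsProfileOn k b (Icc s₀ t) h u v)
    (hk : ∀ s ∈ Icc s₀ t, 0 ≤ k s) (hb : ∀ s ∈ Icc s₀ t, b s ≤ M) (hM : h s₀ ^ 3 * M < 1)
    (hu : u s₀ < 0) (hv : v s₀ < 0) {s : ℝ} (hs : s ∈ Icc s₀ t) :
    (h s, u s, v s) ≤ (h s₀, u s₀, v s₀) := by
  set w : ℝ → ℝ × ℝ × ℝ := fun s ↦ (h s, u s, v s)
  set P : Set (ℝ × ℝ × ℝ) := {w | w.1 ^ 3 * M < 1 ∧ w.2.1 < 0 ∧ w.2.2 < 0}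
  have hP : IsOpen P := IsOpen.and (isOpen_lt (by fun_prop) continuous_const) <|
    (isOpen_lt (by fun_prop) continuous_const).and (isOpen_lt (by fun_prop) continuous_const)
  have mem_P : ∀ x ∈ Icc s₀ t, w x ≤ w s₀ → w x ∈ P := fun x hx hle ↦ by
    refine ⟨?_, hle.2.1.trans_lt hu, hle.2.2.trans_lt hv⟩
    have hpos : 0 < h x := H.pos x hx
    have hle' : h x ^ 3 ≤ h s₀ ^ 3 := pow_le_pow_left₀ hpos.le hle.1 3
    rcases le_total 0 M with hM0 | hM0
    · exact (mul_le_mul_of_nonneg_right hle' hM0).trans_lt hM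
    · exact (mul_nonpos_of_nonneg_of_nonpos (by positivity) hM0).trans_lt one_pos
  have hclosed : IsClosed {x ∈ Icc s₀ t | w x ≤ w s₀} :=
    isClosed_Icc.isClosed_le H.continuousOn continuousOn_const
  -- Where the bound holds, the three inequalities defining `P` hold; they persist for a while, and
  -- meanwhile `h`, `u` and `v` are nonincreasing.
  refine (hclosed.inter isClosed_Icc).Icc_subset_of_forall_exists_gt
    ⟨⟨le_rfl, hs.1.trans hs.2⟩, le_rfl⟩ ?_ hs |>.2
  rintro x ⟨⟨hx, hle⟩, hxt⟩ y (hxy : x < y)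
  have hnear : ∀ᶠ r in 𝓝[≥] x, r ≤ y ∧ r ≤ t ∧ w r ∈ P := by
    have hw := ((H.continuousOn x hx).mono (Icc_subset_Icc_left hx.1)).mono_of_mem_nhdsWithin
      (Icc_mem_nhdsGE hxt.2)
    filter_upwards [Icc_mem_nhdsGE hxy, Icc_mem_nhdsGE hxt.2,
      hw (hP.mem_nhds (mem_P x hx hle))] with r hry hrt hrP using ⟨hry.2, hrt.2, hrP⟩
  obtain ⟨z, hxz, hz⟩ := mem_nhdsGE_iff_exists_Icc_subset.1 hnear
  have hzz : z ∈ Icc x z := ⟨le_of_lt hxz, le_rfl⟩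
  have hsub : Icc x z ⊆ Icc s₀ t := Icc_subset_Icc hx.1 (hz hzz).2.1
  exact ⟨z, ⟨hsub hzz, ((H.mono hsub).le_left_of_forall_trapped (fun r hr ↦ hk r (hsub hr))
    (fun r hr ↦ hb r (hsub hr)) (fun r hr ↦ (hz hr).2.2) hzz).trans hle⟩, hxz, (hz hzz).1⟩

lemma height_le_of_trapped {k₀ : ℝ} (hk₀ : 0 < k₀) (H : IsProfileOn k b (Icc s₀ t) h u v)
    (hk : ∀ s ∈ Icc s₀ t, k₀ ≤ k s) (hb : ∀ s ∈ Icc s₀ t, b s ≤ M) (hM : h s₀ ^ 3 * M < 1)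
    (hu : u s₀ < 0) (hv : v s₀ < 0) (ht : s₀ ≤ t) :
    h t ≤ h s₀ + k₀ * u s₀ * (t - s₀) := by
  have hanti : AntitoneOn (fun s ↦ h s - k₀ * u s₀ * s) (Icc s₀ t) := by
    refine antitoneOn_of_forall_hasDerivWithinAt_nonpos (convex_Icc s₀ t) (fun s hs ↦
      (H.height s hs).sub ((hasDerivAt_id s).const_mul (k₀ * u s₀)).hasDerivWithinAt)
      fun s hs ↦ ?_
    have hus : u s ≤ u s₀ :=
      (H.le_left_of_trapped (fun r hr ↦ hk₀.le.trans (hk r hr)) hb hM hu hv hs).2.1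
    calc k s * u s - k₀ * u s₀ * 1 ≤ k s * u s₀ - k₀ * u s₀ * 1 := by
          have : 0 ≤ k s := hk₀.le.trans (hk s hs)
          gcongr
      _ = (k s - k₀) * u s₀ := by ring
      _ ≤ 0 := mul_nonpos_of_nonneg_of_nonpos (sub_nonneg.2 (hk s hs)) hu.le
  linarith [hanti ⟨le_rfl, ht⟩ ⟨ht, le_rfl⟩ ht]

end Trapping

lemma exists_bound_of_le_height {c σ m M : ℝ} (hm : 0 < m)
    (H : IsProfileOn k b (Ico c σ) h u v) (hk : ∀ s ∈ Ico c σ, |k s| ≤ 1)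
    (hb : ∀ s ∈ Ico c σ, |b s| ≤ M) (hh : ∀ s ∈ Ico c σ, m ≤ h s) :
    ∃ R, ∀ s ∈ Ico c σ, |h s| ≤ R ∧ |u s| ≤ R ∧ |v s| ≤ R := by
  have clock {x B s : ℝ} (hs : s ∈ Ico c σ) (hx : |x| ≤ B) : |k s * x| ≤ B := by
    rw [abs_mul]
    exact (mul_le_of_le_one_left (abs_nonneg _) (hk s hs)).trans hx
  have hF : ∀ s ∈ Ico c σ, |b s - 1 / h s ^ 3| ≤ M + 1 / m ^ 3 := fun s hs ↦ by
    have hpos := H.pos s hs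
    have hinv : |1 / h s ^ 3| ≤ 1 / m ^ 3 := by
      rw [abs_of_pos (by positivity)]
      gcongr
      exact hh s hs
    exact (abs_sub _ _).trans (add_le_add (hb s hs) hinv)
  have hv s (hs : s ∈ Ico c σ) := abs_le_of_forall_hasDerivWithinAt_Ico H.curvature
    (fun s hs ↦ clock hs (hF s hs)) hs
  have hu s (hs : s ∈ Ico c σ) := abs_le_of_forall_hasDerivWithinAt_Ico H.slope
    (fun s hs ↦ clock hs (hv s hs)) hs
  have hh s (hs : s ∈ Ico c σ) := abs_le_of_forall_hasDerivWithinAt_Ico H.height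
    (fun s hs ↦ clock hs (hu s hs)) hs
  exact ⟨max _ (max _ _), fun s hs ↦ ⟨(hh s hs).trans (le_max_left _ _),
    (hu s hs).trans ((le_max_left _ _).trans (le_max_right _ _)),
    (hv s hs).trans ((le_max_right _ _).trans (le_max_right _ _))⟩⟩

section Touchdown

variable {c σ k₀ M : ℝ}

lemma antitoneOn_curvature_add_inv_sq {B : ℝ} (hM : 0 ≤ M) (hk₀ : 0 < k₀)
    (H : IsProfileOn k b (Ico c σ) h u v) (hk : ∀ s ∈ Ico c σ, k s ∈ Icc k₀ 1)
    (hb : ∀ s ∈ Ico c σ, b s ≤ M) (hh : ∀ s ∈ Ico c σ, h s ≤ B * (σ - s)) :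
    AntitoneOn (fun s ↦ v s + k₀ / (2 * B ^ 3) * ((σ - s) ^ 2)⁻¹ - M * s) (Ico c σ) := by
  have deriv_inv_sq : ∀ s < σ, HasDerivAt (fun s ↦ k₀ / (2 * B ^ 3) * ((σ - s) ^ 2)⁻¹)
      (k₀ / (B * (σ - s)) ^ 3) s := fun s hs ↦ by
    have hne : σ - s ≠ 0 := (sub_pos.2 hs).ne'
    refine ((((hasDerivAt_id s).const_sub σ).fun_pow 2).fun_inv (pow_ne_zero 2 hne)
      |>.const_mul _).congr_deriv ?_
    simp only [id_eq, mul_pow]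
    field_simp
    norm_num
  refine antitoneOn_of_forall_hasDerivWithinAt_nonpos (convex_Ico c σ) (fun s hs ↦
    ((H.curvature s hs).add (deriv_inv_sq s hs.2).hasDerivWithinAt).sub
      ((hasDerivAt_id s).const_mul M).hasDerivWithinAt) fun s hs ↦ ?_
  have hpos := H.pos s hs
  have hks_nonneg : 0 ≤ k s := hk₀.le.trans (hk s hs).1
  have hkb : k s * b s ≤ M := calc
    k s * b s ≤ k s * M := mul_le_mul_of_nonneg_left (hb s hs) hks_nonneg
    _ ≤ M := mul_le_of_le_one_left hM (hk s hs).2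
  have hkh : k₀ / (B * (σ - s)) ^ 3 ≤ k s / h s ^ 3 := by
    gcongr
    exacts [(hk s hs).1, hh s hs]
  rw [mul_sub, mul_one_div, mul_one]
  linarith

lemma tendsto_curvature_atBot {B : ℝ} (hB : 0 < B) (hk₀ : 0 < k₀) (hcσ : c < σ)
    (H : IsProfileOn k b (Ico c σ) h u v) (hk : ∀ s ∈ Ico c σ, k s ∈ Icc k₀ 1)
    (hb : ∀ s ∈ Ico c σ, b s ≤ M) (hh : ∀ s ∈ Ico c σ, h s ≤ B * (σ - s)) :
    Tendsto v (𝓝[<] σ) atBot := by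
  set A : ℝ := k₀ / (2 * B ^ 3)
  have hA : 0 < A := by positivity
  have hanti := H.antitoneOn_curvature_add_inv_sq (le_max_right M 0) hk₀ hk
    (fun s hs ↦ (hb s hs).trans (le_max_left M 0)) hh
  set R : ℝ := v c + A * ((σ - c) ^ 2)⁻¹ - max M 0 * c
  have hbound : ∀ᶠ s in 𝓝[<] σ, v s ≤ R + max M 0 * s + -(A * ((σ - s) ^ 2)⁻¹) := by
    filter_upwards [Ico_mem_nhdsLT hcσ] with s hs
    linarith [hanti ⟨le_rfl, hcσ⟩ hs hs.1]
  have hsq : Tendsto (fun s ↦ (σ - s) ^ 2) (𝓝[<] σ) (𝓝[>] 0) := by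
    refine tendsto_nhdsWithin_iff.2 ⟨?_, ?_⟩
    · exact tendsto_nhdsWithin_of_tendsto_nhds <| Continuous.tendsto' (by fun_prop) _ _ (by simp)
    · filter_upwards [self_mem_nhdsWithin] with s hs using pow_pos (sub_pos.2 (mem_Iio.1 hs)) 2
  have hlin : Tendsto (fun s ↦ R + max M 0 * s) (𝓝[<] σ) (𝓝 (R + max M 0 * σ)) :=
    Continuous.continuousWithinAt (by fun_prop)
  exact tendsto_atBot_mono' _ hbound <| hlin.add_atBot <| tendsto_neg_atTop_atBot.comp <|
    (tendsto_inv_nhdsGT_zero.comp hsq).const_mul_atTop hA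

lemma exists_curvature_neg (hk₀ : 0 < k₀) (hcσ : c < σ)
    (H : IsProfileOn k b (Ico c σ) h u v) (hk : ∀ s ∈ Ico c σ, k s ∈ Icc k₀ 1)
    (hb : ∀ s ∈ Ico c σ, b s ≤ M) (h0 : Tendsto h (𝓝[<] σ) (𝓝 0)) :
    ∃ s ∈ Ico c σ, v s < 0 := by
  by_contra! hv
  -- Then `u` is bounded below, so `h = O(σ - s)`, and integrating `1 / h ^ 3` sends `v` to `-∞`.
  have hk_nonneg : ∀ s ∈ Ico c σ, 0 ≤ k s := fun s hs ↦ hk₀.le.trans (hk s hs).1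
  have hu : ∀ s ∈ Ico c σ, u c ≤ u s := fun s hs ↦
    monotoneOn_of_forall_hasDerivWithinAt_nonneg (convex_Ico c σ) H.slope
      (fun r hr ↦ mul_nonneg (hk_nonneg r hr) (hv r hr)) ⟨le_rfl, hcσ⟩ hs hs.1
  have hku : ∀ s ∈ Ico c σ, -(|u c| + 1) ≤ k s * u s := fun s hs ↦ by
    nlinarith [hu s hs, neg_abs_le (u c), hk_nonneg s hs, (hk s hs).2, abs_nonneg (u c)]
  have hbot : Tendsto v (𝓝[<] σ) atBot :=
    H.tendsto_curvature_atBot (by positivity : 0 < |u c| + 1) hk₀ hcσ hk hb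
      fun s hs ↦ le_mul_sub_of_tendsto_zero H.height hku h0 hs
  obtain ⟨s, hvs, hs⟩ := ((hbot.eventually_lt_atBot 0).and (Ico_mem_nhdsLT hcσ)).exists
  exact (hv s hs).not_gt hvs

lemma exists_slope_neg (hcσ : c < σ) (H : IsProfileOn k b (Ico c σ) h u v)
    (hk : ∀ s ∈ Ico c σ, 0 ≤ k s) (h0 : Tendsto h (𝓝[<] σ) (𝓝 0)) :
    ∃ s ∈ Ico c σ, u s < 0 := by
  by_contra! hu
  have hmono : MonotoneOn h (Ico c σ) :=
    monotoneOn_of_forall_hasDerivWithinAt_nonneg (convex_Ico c σ) H.height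
      fun s hs ↦ mul_nonneg (hk s hs) (hu s hs)
  have hc : c ∈ Ico c σ := ⟨le_rfl, hcσ⟩
  have hle : h c ≤ 0 := ge_of_tendsto h0 <| by
    filter_upwards [Ico_mem_nhdsLT hcσ] with s hs using hmono hc hs hs.1
  exact hle.not_gt (H.pos c hc)

lemma eventually_slope_lt_curvature_neg (hk₀ : 0 < k₀) (hcσ : c < σ)
    (H : IsProfileOn k b (Ico c σ) h u v) (hk : ∀ s ∈ Ico c σ, k s ∈ Icc k₀ 1)
    (hb : ∀ s ∈ Ico c σ, b s ≤ M) (h0 : Tendsto h (𝓝[<] σ) (𝓝 0)) :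
    ∃ κ > 0, ∀ᶠ s in 𝓝[<] σ, u s < -κ ∧ v s < 0 := by
  have hk_nonneg : ∀ s ∈ Ico c σ, 0 ≤ k s := fun s hs ↦ hk₀.le.trans (hk s hs).1
  have hsmall : ∀ᶠ s in 𝓝[<] σ, h s ^ 3 * M < 1 ∧ s ∈ Ico c σ :=
    (((h0.pow 3).mul_const M).eventually_lt_const (by simp)).and (Ico_mem_nhdsLT hcσ)
  obtain ⟨c₁, hc₁σ : c₁ < σ, hM⟩ := mem_nhdsLT_iff_exists_Ico_subset.1 hsmall
  have hI₁ : Ico c₁ σ ⊆ Ico c σ := fun s hs ↦ (hM hs).2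
  obtain ⟨c₂, ⟨hc₁₂, hc₂σ⟩, hv⟩ := (H.mono hI₁).exists_curvature_neg hk₀ hc₁σ
    (fun s hs ↦ hk s (hI₁ hs)) (fun s hs ↦ hb s (hI₁ hs)) h0
  have hI₂ : Ico c₂ σ ⊆ Ico c σ := (Ico_subset_Ico_left hc₁₂).trans hI₁
  obtain ⟨c₃, ⟨hc₂₃, hc₃σ⟩, hu⟩ := (H.mono hI₂).exists_slope_neg hc₂σ
    (fun s hs ↦ hk_nonneg s (hI₂ hs)) h0
  have hI₃ : Ico c₃ σ ⊆ Ico c₂ σ := Ico_subset_Ico_left hc₂₃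
  have hv_neg : ∀ s ∈ Ico c₂ σ, v s < 0 := fun s hs ↦ by
    refine ((H.mono hI₁).antitoneOn_curvature (convex_Ico c₁ σ) (fun r hr ↦ hk_nonneg r (hI₁ hr))
      (fun r hr ↦ ?_) ⟨hc₁₂, hc₂σ⟩ ⟨hc₁₂.trans hs.1, hs.2⟩ hs.1).trans_lt hv
    exact (mul_le_mul_of_nonneg_left (hb r (hI₁ hr)) (pow_pos (H.pos r (hI₁ hr)) 3).le).trans
      (hM hr).1.le
  refine ⟨-(u c₃ / 2), by linarith, ?_⟩
  filter_upwards [Ico_mem_nhdsLT hc₃σ] with s hs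
  have hus : u s ≤ u c₃ := (H.mono hI₂).antitoneOn_slope (convex_Ico c₂ σ)
    (fun r hr ↦ hk_nonneg r (hI₂ hr)) (fun r hr ↦ (hv_neg r hr).le) ⟨hc₂₃, hc₃σ⟩ (hI₃ hs) hs.1
  exact ⟨by linarith, hv_neg s (hI₃ hs)⟩

end Touchdown

end IsProfileOn

/-! ### The profile equation -/

/-- The function `(1 + x ^ 2) ^ (1 / 9)`: every power of `1 + x ^ 2` that occurs in the change of
variables is an integer power of it. -/
noncomputable def weight (x : ℝ) : ℝ := (1 + x ^ 2) ^ ((1 : ℝ) / 9)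

lemma one_le_weight (x : ℝ) : 1 ≤ weight x :=
  Real.one_le_rpow (by nlinarith [sq_nonneg x]) (by norm_num)

lemma weight_pos (x : ℝ) : 0 < weight x := one_pos.trans_le (one_le_weight x)

lemma weight_pow_nine (x : ℝ) : weight x ^ 9 = 1 + x ^ 2 := by
  rw [weight, ← Real.rpow_mul_natCast (by positivity)]
  norm_num

lemma weight_le_weight {x X : ℝ} (hx : |x| ≤ X) : weight x ≤ weight X :=
  Real.rpow_le_rpow (by positivity) (add_le_add_right (sq_le_sq.2 (hx.trans (le_abs_self X))) 1)
    (by norm_num)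

lemma contDiff_weight {n : WithTop ℕ∞} : ContDiff ℝ n weight :=
  ContDiff.rpow_const_of_ne (by fun_prop) fun x ↦ by positivity

/-- The speed of the variable `tan θ` along solutions of (D), as a function of `tan θ`. -/
noncomputable def clockRate (x : ℝ) : ℝ := (weight x ^ 4)⁻¹

lemma contDiff_clockRate {n : WithTop ℕ∞} : ContDiff ℝ n clockRate :=
  (contDiff_weight.pow 4).inv fun x ↦ (pow_pos (weight_pos x) 4).ne'

lemma clockRate_pos (x : ℝ) : 0 < clockRate x := inv_pos.2 (pow_pos (weight_pos x) 4)

lemma clockRate_le_one (x : ℝ) : clockRate x ≤ 1 :=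
  inv_le_one_of_one_le₀ (one_le_pow₀ (one_le_weight x))

lemma clockRate_le_clockRate {x X : ℝ} (hx : |x| ≤ X) : clockRate X ≤ clockRate x :=
  inv_anti₀ (pow_pos (weight_pos x) 4) (pow_le_pow_left₀ (weight_pos x).le (weight_le_weight hx) 4)

/-- The autonomous field of the profile equation `h''' = 1 / h ^ 3 - a - ξ ^ 2` in the variables
`(h, h', h'', ξ)`, run with the clock of system (D). -/
noncomputable def profileField (a : ℝ) (z : ℝ × ℝ × ℝ × ℝ) : ℝ × ℝ × ℝ × ℝ :=
  (clockRate z.2.2.2 * z.2.1, clockRate z.2.2.2 * z.2.2.1,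
    clockRate z.2.2.2 * (1 / z.1 ^ 3 - a - z.2.2.2 ^ 2), clockRate z.2.2.2)

/-- The set of states `(h, h', h'', ξ)` of positive height, where `profileField` is smooth. -/
def profileDomain : Set (ℝ × ℝ × ℝ × ℝ) := {z | 0 < z.1}

lemma isOpen_profileDomain : IsOpen profileDomain := isOpen_lt continuous_const continuous_fst

lemma contDiffOn_profileField (a : ℝ) {n : WithTop ℕ∞} :
    ContDiffOn ℝ n (profileField a) profileDomain := by
  have hclock : ContDiff ℝ n fun z : ℝ × ℝ × ℝ × ℝ ↦ clockRate z.2.2.2 :=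
    contDiff_clockRate.comp (by fun_prop)
  have hforce : ContDiffOn ℝ n (fun z : ℝ × ℝ × ℝ × ℝ ↦ 1 / z.1 ^ 3 - a - z.2.2.2 ^ 2)
      profileDomain := by
    have hinv : ContDiffOn ℝ n (fun z : ℝ × ℝ × ℝ × ℝ ↦ 1 / z.1 ^ 3) profileDomain :=
      contDiffOn_const.div (by fun_prop) fun z (hz : 0 < z.1) ↦ pow_ne_zero 3 hz.ne'
    exact (hinv.sub contDiffOn_const).sub (by fun_prop)
  exact (hclock.mul (by fun_prop)).contDiffOn.prodMk <|
    (hclock.mul (by fun_prop)).contDiffOn.prodMk <|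
    (hclock.contDiffOn.mul hforce).prodMk hclock.contDiffOn

section Components

variable {E F : Type*} [NormedAddCommGroup E] [NormedSpace ℝ E] [NormedAddCommGroup F]
  [NormedSpace ℝ F] {f : ℝ → E × F} {f' : E × F} {S : Set ℝ} {t : ℝ}

lemma hasDerivWithinAt_fst (hf : HasDerivWithinAt f f' S t) :
    HasDerivWithinAt (fun t ↦ (f t).1) f'.1 S t := by
  simpa using hf.hasFDerivWithinAt.fst.hasDerivWithinAt

lemma hasDerivWithinAt_snd (hf : HasDerivWithinAt f f' S t) :
    HasDerivWithinAt (fun t ↦ (f t).2) f'.2 S t := by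
  simpa using hf.hasFDerivWithinAt.snd.hasDerivWithinAt

end Components

lemma isIntegralCurveIn_profileField_iff {a : ℝ} {γ : ℝ → ℝ × ℝ × ℝ × ℝ} {S : Set ℝ} :
    IsIntegralCurveIn (profileField a) profileDomain γ S ↔ ∀ t ∈ S, 0 < (γ t).1 ∧
      HasDerivWithinAt (fun t ↦ (γ t).1) (clockRate (γ t).2.2.2 * (γ t).2.1) S t ∧
      HasDerivWithinAt (fun t ↦ (γ t).2.1) (clockRate (γ t).2.2.2 * (γ t).2.2.1) S t ∧
      HasDerivWithinAt (fun t ↦ (γ t).2.2.1)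
        (clockRate (γ t).2.2.2 * (1 / (γ t).1 ^ 3 - a - (γ t).2.2.2 ^ 2)) S t ∧
      HasDerivWithinAt (fun t ↦ (γ t).2.2.2) (clockRate (γ t).2.2.2) S t := by
  refine ⟨fun h t ht ↦ ?_, fun h ↦ ⟨fun t ht ↦ ?_, fun t ht ↦ (h t ht).1⟩⟩
  · have hγ := h.isIntegralCurveOn t ht
    have hγ₂ := hasDerivWithinAt_snd hγ
    have hγ₃ := hasDerivWithinAt_snd hγ₂
    exact ⟨h.mapsTo ht, hasDerivWithinAt_fst hγ, hasDerivWithinAt_fst hγ₂,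
      hasDerivWithinAt_fst hγ₃, hasDerivWithinAt_snd hγ₃⟩
  · obtain ⟨-, h₁, h₂, h₃, h₄⟩ := h t ht
    exact h₁.prodMk <| h₂.prodMk <| h₃.prodMk h₄

section ReversedProfile

variable {a : ℝ} {γ : ℝ → ℝ × ℝ × ℝ × ℝ} {S : Set ℝ}

lemma isProfileOn_of_isIntegralCurveIn_neg
    (h : IsIntegralCurveIn (-profileField a) profileDomain γ S) :
    IsProfileOn (fun s ↦ clockRate (γ s).2.2.2) (fun s ↦ a + (γ s).2.2.2 ^ 2) S
      (fun s ↦ (γ s).1) (fun s ↦ -(γ s).2.1) fun s ↦ (γ s).2.2.1 where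
  pos _ hs := h.mapsTo hs
  height s hs := (hasDerivWithinAt_fst (h.isIntegralCurveOn s hs)).congr_deriv <| by
    simp [profileField]
  slope s hs :=
    (hasDerivWithinAt_fst (hasDerivWithinAt_snd (h.isIntegralCurveOn s hs))).fun_neg.congr_deriv <|
      by simp [profileField]
  curvature s hs := (hasDerivWithinAt_fst <| hasDerivWithinAt_snd <| hasDerivWithinAt_snd <|
    h.isIntegralCurveOn s hs).congr_deriv <| by
      simp only [profileField, Pi.neg_apply, Prod.snd_neg, Prod.fst_neg]
      ring

lemma abs_position_sub_le (hS : Convex ℝ S)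
    (h : IsIntegralCurveIn (-profileField a) profileDomain γ S) {c s : ℝ} (hc : c ∈ S)
    (hs : s ∈ S) : |(γ s).2.2.2 - (γ c).2.2.2| ≤ |s - c| := by
  simpa using hS.norm_image_sub_le_of_norm_hasDerivWithin_le (C := 1)
    (fun s hs ↦ hasDerivWithinAt_snd <| hasDerivWithinAt_snd <| hasDerivWithinAt_snd <|
      h.isIntegralCurveOn s hs) (fun s _ ↦ by
        simpa [profileField, abs_of_pos (clockRate_pos _)] using clockRate_le_one _) hc hs

lemma abs_position_le {σ s : ℝ} (hS : Convex ℝ S) (hσ : S ⊆ Icc 0 σ) (h0 : 0 ∈ S)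
    (h : IsIntegralCurveIn (-profileField a) profileDomain γ S) (hs : s ∈ S) :
    |(γ s).2.2.2| ≤ |(γ 0).2.2.2| + σ := by
  have hle := abs_position_sub_le hS h h0 hs
  rw [sub_zero, abs_of_nonneg (hσ hs).1] at hle
  linarith [abs_sub_abs_le_abs_sub (γ s).2.2.2 (γ 0).2.2.2, (hσ hs).2]

lemma abs_add_sq_le {x X : ℝ} (hx : |x| ≤ X) : |a + x ^ 2| ≤ |a| + X ^ 2 :=
  (abs_add_le a _).trans <| by
    rw [abs_pow]
    gcongr

/-- The touchdown set: the solution of the profile equation through `y` reaches height zero in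
finite backward time. Time is reversed, so the curve runs on `[0, σ)`. -/
def TouchesDown (a : ℝ) (y : ℝ × ℝ × ℝ × ℝ) : Prop :=
  ∃ σ > 0, ∃ γ : ℝ → ℝ × ℝ × ℝ × ℝ, γ 0 = y ∧
    IsIntegralCurveIn (-profileField a) profileDomain γ (Ico 0 σ) ∧
    Tendsto (fun s ↦ (γ s).1) (𝓝[<] σ) (𝓝 0)

/-- States that are driven to height zero within one unit of backward time: going backward, the
height decreases fast enough for its size, and it stays so low that the curvature, which is
negative, keeps decreasing. -/
def trappingRegion (a : ℝ) : Set (ℝ × ℝ × ℝ × ℝ) :=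
  {z | 0 < z.1 ∧ z.1 < clockRate (|z.2.2.2| + 1) * z.2.1 ∧
    z.1 ^ 3 * (|a| + (|z.2.2.2| + 1) ^ 2) < 1 ∧ z.2.2.1 < 0}

lemma isOpen_trappingRegion (a : ℝ) : IsOpen (trappingRegion a) := by
  have hclock : Continuous clockRate := (contDiff_clockRate (n := 0)).continuous
  exact (isOpen_lt (by fun_prop) (by fun_prop)).and <|
    (isOpen_lt (by fun_prop) (by fun_prop)).and <|
    (isOpen_lt (by fun_prop) (by fun_prop)).and (isOpen_lt (by fun_prop) (by fun_prop))

lemma slope_pos_of_mem_trappingRegion {z : ℝ × ℝ × ℝ × ℝ} (hz : z ∈ trappingRegion a) :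
    0 < z.2.1 :=
  pos_of_mul_pos_right (hz.1.trans hz.2.1) (clockRate_pos _).le

lemma not_isIntegralCurveIn_Icc_of_mem_trappingRegion (hz : γ 0 ∈ trappingRegion a) :
    ¬IsIntegralCurveIn (-profileField a) profileDomain γ (Icc 0 1) := fun h ↦ by
  have hpos s (hs : s ∈ Icc 0 1) : |(γ s).2.2.2| ≤ |(γ 0).2.2.2| + 1 :=
    abs_position_le (convex_Icc 0 1) subset_rfl (by simp) h hs
  have hle := (isProfileOn_of_isIntegralCurveIn_neg h).height_le_of_trapped
    (clockRate_pos (|(γ 0).2.2.2| + 1)) (fun s hs ↦ clockRate_le_clockRate (hpos s hs))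
    (fun s hs ↦ (le_abs_self _).trans (abs_add_sq_le (hpos s hs))) hz.2.2.1
    (neg_lt_zero.2 (slope_pos_of_mem_trappingRegion hz)) hz.2.2.2 zero_le_one
  have h1 : 0 < (γ 1).1 := h.mapsTo (by simp)
  linarith [hz.2.1]

lemma antitoneOn_height_of_mem_trappingRegion {σ : ℝ} (hσ : σ ≤ 1) (hz : γ 0 ∈ trappingRegion a)
    (h : IsIntegralCurveIn (-profileField a) profileDomain γ (Ico 0 σ)) :
    AntitoneOn (fun s ↦ (γ s).1) (Ico 0 σ) := by
  have H := isProfileOn_of_isIntegralCurveIn_neg h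
  have hslope : -(γ 0).2.1 < 0 := neg_lt_zero.2 (slope_pos_of_mem_trappingRegion hz)
  refine H.antitoneOn_height (convex_Ico 0 σ) (fun s _ ↦ (clockRate_pos _).le) fun t ht ↦ ?_
  have hsub : Icc 0 t ⊆ Ico 0 σ := Icc_subset_Ico_right ht.2
  refine ((H.mono hsub).le_left_of_trapped (fun s _ ↦ (clockRate_pos _).le) (fun s hs ↦ ?_)
    hz.2.2.1 hslope hz.2.2.2 ⟨ht.1, le_rfl⟩).2.1.trans hslope.le
  exact (le_abs_self _).trans <| abs_add_sq_le <| abs_position_le (convex_Ico 0 σ)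
    (fun r hr ↦ ⟨hr.1, hr.2.le.trans hσ⟩) (hsub ⟨le_rfl, ht.1⟩) h (hsub hs)

lemma exists_height_lt_of_forall_not_mapsTo {σ c : ℝ} (hσ : 0 < σ) (hc : 0 < c)
    (h : IsIntegralCurveIn (-profileField a) profileDomain γ (Ico 0 σ))
    (hC : ∀ C, IsCompact C → C ⊆ profileDomain → ¬MapsTo γ (Ico 0 σ) C) :
    ∃ s ∈ Ico 0 σ, (γ s).1 < c := by
  by_contra! hle
  have hpos s (hs : s ∈ Ico 0 σ) : |(γ s).2.2.2| ≤ |(γ 0).2.2.2| + σ :=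
    abs_position_le (convex_Ico 0 σ) Ico_subset_Icc_self ⟨le_rfl, hσ⟩ h hs
  obtain ⟨R, hR⟩ := (isProfileOn_of_isIntegralCurveIn_neg h).exists_bound_of_le_height hc
    (fun s _ ↦ (abs_of_pos (clockRate_pos _)).trans_le (clockRate_le_one _))
    (fun s hs ↦ abs_add_sq_le (hpos s hs)) hle
  set X : ℝ := |(γ 0).2.2.2| + σ
  refine hC (Icc c R ×ˢ Icc (-R) R ×ˢ Icc (-R) R ×ˢ Icc (-X) X)
    (isCompact_Icc.prod <| isCompact_Icc.prod <| isCompact_Icc.prod isCompact_Icc)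
    (fun z hz ↦ hc.trans_le hz.1.1) fun s hs ↦ ?_
  obtain ⟨hh, hu, hv⟩ := hR s hs
  exact ⟨⟨hle s hs, (le_abs_self _).trans hh⟩, abs_le.1 (abs_neg (γ s).2.1 ▸ hu), abs_le.1 hv,
    abs_le.1 (hpos s hs)⟩

lemma touchesDown_of_mem_trappingRegion {z : ℝ × ℝ × ℝ × ℝ} (hz : z ∈ trappingRegion a) :
    TouchesDown a z := by
  obtain ⟨σ, hσ, hσ1, γ, rfl, hγ, hC⟩ := exists_maximal_isIntegralCurveIn isOpen_profileDomain
    (contDiffOn_profileField a).neg hz.1 fun ⟨γ, hγ0, hγ⟩ ↦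
      not_isIntegralCurveIn_Icc_of_mem_trappingRegion (hγ0 ▸ hz) hγ
  refine ⟨σ, hσ, γ, rfl, hγ, tendsto_order.2 ⟨fun c hc ↦ ?_, fun c hc ↦ ?_⟩⟩
  · filter_upwards [Ico_mem_nhdsLT hσ] with s hs using hc.trans (hγ.mapsTo hs)
  · obtain ⟨s, hs, hsc⟩ := exists_height_lt_of_forall_not_mapsTo hσ hc hγ hC
    filter_upwards [Ico_mem_nhdsLT hs.2] with r hr
    exact (antitoneOn_height_of_mem_trappingRegion hσ1 hz hγ hs ⟨hs.1.trans hr.1, hr.2⟩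
      hr.1).trans_lt hsc

lemma TouchesDown.exists_mem_trappingRegion {y : ℝ × ℝ × ℝ × ℝ} (hy : TouchesDown a y) :
    ∃ T ≥ 0, ∃ γ, γ 0 = y ∧ IsIntegralCurveIn (-profileField a) profileDomain γ (Icc 0 T) ∧
      γ T ∈ trappingRegion a := by
  obtain ⟨σ, hσ, γ, rfl, hγ, h0⟩ := hy
  have hpos s (hs : s ∈ Ico 0 σ) : |(γ s).2.2.2| ≤ |(γ 0).2.2.2| + σ :=
    abs_position_le (convex_Ico 0 σ) Ico_subset_Icc_self ⟨le_rfl, hσ⟩ hγ hs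
  obtain ⟨κ, hκ, hev⟩ :=
    (isProfileOn_of_isIntegralCurveIn_neg hγ).eventually_slope_lt_curvature_neg
      (clockRate_pos (|(γ 0).2.2.2| + σ)) hσ
      (fun s hs ↦ ⟨clockRate_le_clockRate (hpos s hs), clockRate_le_one _⟩)
      (fun s hs ↦ (le_abs_self _).trans (abs_add_sq_le (hpos s hs))) h0
  set X : ℝ := |(γ 0).2.2.2| + σ
  have hspeed : ∀ᶠ s in 𝓝[<] σ, (γ s).1 < clockRate (X + 1) * κ :=
    h0.eventually_lt_const (mul_pos (clockRate_pos _) hκ)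
  have hcube : ∀ᶠ s in 𝓝[<] σ, (γ s).1 ^ 3 * (|a| + (X + 1) ^ 2) < 1 :=
    ((h0.pow 3).mul_const _).eventually_lt_const (by simp)
  obtain ⟨s, ⟨hu, hv⟩, hspeed, hcube, hs⟩ :=
    (hev.and (hspeed.and (hcube.and (Ico_mem_nhdsLT hσ)))).exists
  have hXs : |(γ s).2.2.2| + 1 ≤ X + 1 := add_le_add_left (hpos s hs) 1
  refine ⟨s, hs.1, γ, rfl, hγ.mono (Icc_subset_Ico_right hs.2), hγ.mapsTo hs, ?_, ?_, hv⟩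
  · refine hspeed.trans_le (mul_le_mul (clockRate_le_clockRate ?_) (by linarith) hκ.le
      (clockRate_pos _).le)
    rwa [abs_of_nonneg (by positivity)]
  · have : 0 < (γ s).1 := hγ.mapsTo hs
    refine lt_of_le_of_lt ?_ hcube
    gcongr

lemma TouchesDown.of_isIntegralCurveIn {T : ℝ} (hT : 0 ≤ T)
    (h : IsIntegralCurveIn (-profileField a) profileDomain γ (Icc 0 T))
    (hγT : TouchesDown a (γ T)) : TouchesDown a (γ 0) := by
  obtain ⟨σ, hσ, η, hη0, hη, hlim⟩ := hγT
  have hshift : IsIntegralCurveIn (-profileField a) profileDomain (fun t ↦ η (t - T))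
      (Ico T (T + σ)) := by
    simpa [add_comm σ] using hη.comp_sub_const T
  refine ⟨T + σ, by positivity, _, if_pos hT, h.concat hT (by linarith) hshift (by simp [hη0]), ?_⟩
  have hsub : Tendsto (fun t ↦ t - T) (𝓝[<] (T + σ)) (𝓝[<] σ) := by
    simpa only [Tendsto, add_sub_cancel_left] using (map_subRight_nhdsLT (a := T + σ) (c := T)).le
  refine (hlim.comp hsub).congr' ?_
  filter_upwards [Ioo_mem_nhdsLT (lt_add_of_pos_right T hσ)] with t ht
  simp [ht.1.not_ge]

lemma isOpen_setOf_touchesDown (a : ℝ) : IsOpen {y | TouchesDown a y} := by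
  refine isOpen_iff_mem_nhds.2 fun y hy ↦ ?_
  obtain ⟨T, hT, γ, rfl, hγ, hmem⟩ := TouchesDown.exists_mem_trappingRegion hy
  filter_upwards [hγ.eventually_exists_mem isOpen_profileDomain (contDiffOn_profileField a).neg hT
    ((isOpen_trappingRegion a).mem_nhds hmem)]
  rintro _ ⟨γ', rfl, hγ', hmem'⟩
  exact .of_isIntegralCurveIn hT hγ' (touchesDown_of_mem_trappingRegion hmem')

end ReversedProfile

/-! ### Change of variables -/

lemma hasDerivAt_weight (x : ℝ) : HasDerivAt weight (2 / 9 * x / weight x ^ 8) x := by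
  have hpos : 0 < 1 + x ^ 2 := by positivity
  have hpow : (1 + x ^ 2) ^ ((1 : ℝ) / 9 - 1) = (weight x ^ 8)⁻¹ := by
    rw [weight, ← Real.rpow_mul_natCast hpos.le, ← Real.rpow_neg hpos.le]
    norm_num
  refine (((hasDerivAt_id x).fun_pow 2).const_add 1 |>.rpow_const (p := 1 / 9)
    (.inl hpos.ne')).congr_deriv ?_
  rw [id, hpow]
  ring

section Trigonometric

variable {θ : ℝ}

lemma cos_rpow_eq (hθ : θ ∈ Ioo (-(Real.pi / 2)) (Real.pi / 2)) (n : ℕ) {y : ℝ}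
    (hy : y = 2 * n / 9) : Real.cos θ ^ y = (weight (Real.tan θ) ^ n)⁻¹ := by
  have hc : 0 < Real.cos θ := Real.cos_pos_of_mem_Ioo hθ
  have htan : 1 + Real.tan θ ^ 2 = Real.cos θ ^ (-2 : ℝ) := by
    rw [← inv_inv (1 + Real.tan θ ^ 2), Real.inv_one_add_tan_sq hc.ne', Real.rpow_neg hc.le,
      Real.rpow_two]
  rw [weight, htan, ← Real.rpow_mul hc.le, ← Real.rpow_mul_natCast hc.le, ← Real.rpow_neg hc.le,
    hy]
  congr 1
  ring

lemma cos_sq_eq (hθ : θ ∈ Ioo (-(Real.pi / 2)) (Real.pi / 2)) :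
    Real.cos θ ^ 2 = (weight (Real.tan θ) ^ 9)⁻¹ := by
  rw [← cos_rpow_eq hθ 9 (y := 2) (by norm_num), Real.rpow_two]

lemma cos_mul_rpow_eq (hθ : θ ∈ Ioo (-(Real.pi / 2)) (Real.pi / 2)) (n : ℕ) {y : ℝ}
    (hy : 1 + y = 2 * n / 9) :
    Real.cos θ * Real.cos θ ^ y = (weight (Real.tan θ) ^ n)⁻¹ := by
  rw [← cos_rpow_eq hθ n hy, Real.rpow_add (Real.cos_pos_of_mem_Ioo hθ), Real.rpow_one]

lemma inv_cos_sq_mul_cos_rpow (hθ : θ ∈ Ioo (-(Real.pi / 2)) (Real.pi / 2)) :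
    1 / Real.cos θ ^ 2 * Real.cos θ ^ ((26 : ℝ) / 9) = clockRate (Real.tan θ) := by
  rw [cos_rpow_eq hθ 13 (by norm_num), cos_sq_eq hθ, clockRate]
  have := weight_pos (Real.tan θ)
  field_simp

lemma one_div_mul_clockRate (x : ℝ) :
    1 / (1 + x ^ 2) * clockRate x = Real.cos (Real.arctan x) ^ ((26 : ℝ) / 9) := by
  rw [cos_rpow_eq (Real.arctan_mem_Ioo x) 13 (by norm_num), Real.tan_arctan, ← weight_pow_nine,
    clockRate]
  have := weight_pos x
  field_simp

/-- The right-hand side `dPsi` of the `Ψ` equation in terms of `x = tan θ`. -/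
noncomputable def dPsiTan (a Φ W Ψ x : ℝ) : ℝ :=
  1 / Φ ^ 3 - (a + x ^ 2) / weight x ^ 9 -
    ((16 / 3 * x / weight x ^ 30 - 224 / 27 * x ^ 3 / weight x ^ 39) * Φ +
      (208 / 81 * x ^ 2 / weight x ^ 9 - 10 / 9) / weight x ^ 17 * W +
      2 / 3 * x / weight x ^ 13 * Ψ)

lemma dPsi_eq_dPsiTan (hθ : θ ∈ Ioo (-(Real.pi / 2)) (Real.pi / 2)) (a Φ W Ψ : ℝ) :
    dPsi a Φ W Ψ θ = dPsiTan a Φ W Ψ (Real.tan θ) := by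
  have hc : Real.cos θ ≠ 0 := (Real.cos_pos_of_mem_Ioo hθ).ne'
  have h9 : (1 + Real.tan θ ^ 2) * (weight (Real.tan θ) ^ 9)⁻¹ = 1 := by
    rw [← weight_pow_nine, mul_inv_cancel₀ (pow_pos (weight_pos _) 9).ne']
  have h17 : Real.cos θ ^ ((34 : ℝ) / 9) = (weight (Real.tan θ) ^ 17)⁻¹ :=
    cos_rpow_eq hθ 17 (by norm_num)
  have h30 := cos_mul_rpow_eq hθ 30 (y := 17 / 3) (by norm_num)
  have h13 := cos_mul_rpow_eq hθ 13 (y := 17 / 9) (by norm_num)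
  rw [dPsi, dPsiTan, ← Real.tan_mul_cos hc, h17]
  set x := Real.tan θ
  set w := (weight x ^ 9)⁻¹
  have h2 : Real.cos θ ^ 2 = w := cos_sq_eq hθ
  linear_combination h9 + (224 / 27 * x ^ 3 * Real.cos θ * Real.cos θ ^ ((17 : ℝ) / 3) * Φ
    - (a - 1) - 208 / 81 * x ^ 2 * (weight x ^ 17)⁻¹ * W) * h2
    + (224 / 27 * x ^ 3 * w - 16 / 3 * x) * Φ * h30 - 2 / 3 * x * Ψ * h13

end Trigonometric

/-- The height `h = Φ (1 + x ^ 2) ^ (-1 / 3)` of the profile, where `x = tan θ`. -/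
noncomputable def profileHeight (x Φ : ℝ) : ℝ := Φ / weight x ^ 3

/-- The derivative `dh / dx` of the profile, where `W = dΦ / dτ`. -/
noncomputable def profileSlope (x Φ W : ℝ) : ℝ := weight x * W - 2 / 3 * x * Φ / weight x ^ 12

/-- The second derivative of the profile with respect to `x`, where `Ψ = d²Φ / dτ²`. -/
noncomputable def profileCurvature (x Φ W Ψ : ℝ) : ℝ :=
  weight x ^ 5 * Ψ - 4 / 9 * x * profileSlope x Φ W / weight x ^ 9
    - 2 / 3 * Φ / weight x ^ 12 + 40 / 27 * x ^ 2 * Φ / weight x ^ 21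

/-- The value of `Φ` for a profile of height `h` at `x`. -/
noncomputable def heightOfProfile (x h : ℝ) : ℝ := h * weight x ^ 3

/-- The value of `W = Φ'` for a profile of height `h` and slope `p` at `x`. -/
noncomputable def velocityOfProfile (x h p : ℝ) : ℝ := p / weight x + 2 / 3 * x * h / weight x ^ 10

/-- The value of `Ψ = Φ''` for a profile of height `h`, slope `p` and curvature `q` at `x`. -/
noncomputable def accelerationOfProfile (x h p q : ℝ) : ℝ :=
  q / weight x ^ 5 + 4 / 9 * x * p / weight x ^ 14 + 2 / 3 * h / weight x ^ 14
    - 40 / 27 * x ^ 2 * h / weight x ^ 23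

lemma hasDerivWithinAt_weight_comp {S : Set ℝ} {t : ℝ} {x : ℝ → ℝ}
    (hx : HasDerivWithinAt x (clockRate (x t)) S t) :
    HasDerivWithinAt (fun t ↦ weight (x t)) (2 / 9 * x t / weight (x t) ^ 12) S t := by
  refine ((hasDerivAt_weight (x t)).comp_hasDerivWithinAt t hx).congr_deriv ?_
  rw [clockRate]
  field_simp

section Derivatives

variable {S : Set ℝ} {t : ℝ} {x : ℝ → ℝ}

section

variable {Φ W Ψ : ℝ → ℝ}

lemma hasDerivWithinAt_profileHeight (hx : HasDerivWithinAt x (clockRate (x t)) S t)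
    (hΦ : HasDerivWithinAt Φ (W t) S t) :
    HasDerivWithinAt (fun t ↦ profileHeight (x t) (Φ t))
      (clockRate (x t) * profileSlope (x t) (Φ t) (W t)) S t := by
  have hr := hasDerivWithinAt_weight_comp hx
  have hpos := weight_pos (x t)
  refine (hΦ.div (hr.fun_pow 3) (by positivity)).congr_deriv ?_
  rw [clockRate, profileSlope]
  push_cast
  field_simp
  ring

lemma hasDerivWithinAt_profileSlope (hx : HasDerivWithinAt x (clockRate (x t)) S t)
    (hΦ : HasDerivWithinAt Φ (W t) S t) (hW : HasDerivWithinAt W (Ψ t) S t) :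
    HasDerivWithinAt (fun t ↦ profileSlope (x t) (Φ t) (W t))
      (clockRate (x t) * profileCurvature (x t) (Φ t) (W t) (Ψ t)) S t := by
  have hr := hasDerivWithinAt_weight_comp hx
  have hpos := weight_pos (x t)
  refine ((hr.fun_mul hW).fun_sub (((hx.const_mul (2 / 3)).fun_mul hΦ).fun_div (hr.fun_pow 12)
    (by positivity))).congr_deriv ?_
  rw [clockRate, profileCurvature, profileSlope]
  push_cast
  field_simp
  ring

lemma hasDerivWithinAt_profileCurvature {a : ℝ} (hx : HasDerivWithinAt x (clockRate (x t)) S t)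
    (hΦ : HasDerivWithinAt Φ (W t) S t) (hW : HasDerivWithinAt W (Ψ t) S t)
    (hΨ : HasDerivWithinAt Ψ (dPsiTan a (Φ t) (W t) (Ψ t) (x t)) S t) (hΦ0 : Φ t ≠ 0) :
    HasDerivWithinAt (fun t ↦ profileCurvature (x t) (Φ t) (W t) (Ψ t))
      (clockRate (x t) * (1 / profileHeight (x t) (Φ t) ^ 3 - a - x t ^ 2)) S t := by
  have hr := hasDerivWithinAt_weight_comp hx
  have hpos := weight_pos (x t)
  have hslope := hasDerivWithinAt_profileSlope hx hΦ hW
  refine (((((hr.fun_pow 5).fun_mul hΨ).fun_sub (((hx.const_mul (4 / 9)).fun_mul hslope).fun_div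
    (hr.fun_pow 9) (by positivity))).fun_sub ((hΦ.const_mul (2 / 3)).fun_div (hr.fun_pow 12)
    (by positivity))).fun_add ((((hx.fun_pow 2).const_mul (40 / 27)).fun_mul hΦ).fun_div
    (hr.fun_pow 21) (by positivity))).congr_deriv ?_
  rw [clockRate, profileCurvature, profileSlope, profileHeight, dPsiTan]
  push_cast
  field_simp
  ring

end

variable {h p q : ℝ → ℝ}

lemma hasDerivWithinAt_heightOfProfile (hx : HasDerivWithinAt x (clockRate (x t)) S t)
    (hh : HasDerivWithinAt h (clockRate (x t) * p t) S t) :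
    HasDerivWithinAt (fun t ↦ heightOfProfile (x t) (h t)) (velocityOfProfile (x t) (h t) (p t))
      S t := by
  have hr := hasDerivWithinAt_weight_comp hx
  have hpos := weight_pos (x t)
  refine (hh.fun_mul (hr.fun_pow 3)).congr_deriv ?_
  rw [clockRate, velocityOfProfile]
  push_cast
  field_simp
  ring

lemma hasDerivWithinAt_velocityOfProfile (hx : HasDerivWithinAt x (clockRate (x t)) S t)
    (hh : HasDerivWithinAt h (clockRate (x t) * p t) S t)
    (hp : HasDerivWithinAt p (clockRate (x t) * q t) S t) :
    HasDerivWithinAt (fun t ↦ velocityOfProfile (x t) (h t) (p t))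
      (accelerationOfProfile (x t) (h t) (p t) (q t)) S t := by
  have hr := hasDerivWithinAt_weight_comp hx
  have hpos := weight_pos (x t)
  refine ((hp.fun_div hr hpos.ne').fun_add (((hx.const_mul (2 / 3)).fun_mul hh).fun_div
    (hr.fun_pow 10) (by positivity))).congr_deriv ?_
  rw [clockRate, accelerationOfProfile]
  push_cast
  field_simp
  ring

lemma hasDerivWithinAt_accelerationOfProfile {a : ℝ}
    (hx : HasDerivWithinAt x (clockRate (x t)) S t)
    (hh : HasDerivWithinAt h (clockRate (x t) * p t) S t)
    (hp : HasDerivWithinAt p (clockRate (x t) * q t) S t)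
    (hq : HasDerivWithinAt q (clockRate (x t) * (1 / h t ^ 3 - a - x t ^ 2)) S t)
    (hh0 : h t ≠ 0) :
    HasDerivWithinAt (fun t ↦ accelerationOfProfile (x t) (h t) (p t) (q t))
      (dPsiTan a (heightOfProfile (x t) (h t)) (velocityOfProfile (x t) (h t) (p t))
        (accelerationOfProfile (x t) (h t) (p t) (q t)) (x t)) S t := by
  have hr := hasDerivWithinAt_weight_comp hx
  have hpos := weight_pos (x t)
  refine ((((hq.fun_div (hr.fun_pow 5) (by positivity)).fun_add (((hx.const_mul (4 / 9)).fun_mul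
    hp).fun_div (hr.fun_pow 14) (by positivity))).fun_add ((hh.const_mul (2 / 3)).fun_div
    (hr.fun_pow 14) (by positivity))).fun_sub ((((hx.fun_pow 2).const_mul (40 / 27)).fun_mul
    hh).fun_div (hr.fun_pow 23) (by positivity))).congr_deriv ?_
  rw [clockRate, dPsiTan, heightOfProfile, velocityOfProfile, accelerationOfProfile]
  push_cast
  field_simp
  ring

end Derivatives

/-- The change of variables from states `(Φ, W, Ψ, θ)` of (D) to states `(h, h', h'', ξ)` of the
profile equation. -/
noncomputable def toProfile (y : ℝ × ℝ × ℝ × ℝ) : ℝ × ℝ × ℝ × ℝ :=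
  (profileHeight (Real.tan y.2.2.2) y.1, profileSlope (Real.tan y.2.2.2) y.1 y.2.1,
    profileCurvature (Real.tan y.2.2.2) y.1 y.2.1 y.2.2.1, Real.tan y.2.2.2)

/-- The change of variables from states of the profile equation to states of (D), inverse to
`toProfile` on the strip `θ ∈ (-π / 2, π / 2)`. -/
noncomputable def ofProfile (z : ℝ × ℝ × ℝ × ℝ) : ℝ × ℝ × ℝ × ℝ :=
  (heightOfProfile z.2.2.2 z.1, velocityOfProfile z.2.2.2 z.1 z.2.1,
    accelerationOfProfile z.2.2.2 z.1 z.2.1 z.2.2.1, Real.arctan z.2.2.2)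

lemma ofProfile_toProfile {y : ℝ × ℝ × ℝ × ℝ}
    (hy : y.2.2.2 ∈ Ioo (-(Real.pi / 2)) (Real.pi / 2)) : ofProfile (toProfile y) = y := by
  have := weight_pos (Real.tan y.2.2.2)
  refine Prod.ext ?_ <| Prod.ext ?_ <| Prod.ext ?_ <| Real.arctan_tan hy.1 hy.2
  all_goals
    simp only [ofProfile, toProfile, heightOfProfile, velocityOfProfile, accelerationOfProfile,
      profileHeight, profileSlope, profileCurvature]
    field_simp
    try ring

lemma continuousAt_toProfile {y : ℝ × ℝ × ℝ × ℝ}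
    (hy : y.2.2.2 ∈ Ioo (-(Real.pi / 2)) (Real.pi / 2)) : ContinuousAt toProfile y := by
  have htan : ContinuousAt (fun y : ℝ × ℝ × ℝ × ℝ ↦ Real.tan y.2.2.2) y :=
    (Real.continuousAt_tan.2 (Real.cos_pos_of_mem_Ioo hy).ne').comp
      (f := fun y : ℝ × ℝ × ℝ × ℝ ↦ y.2.2.2) (by fun_prop)
  have hweight : ContinuousAt (fun y : ℝ × ℝ × ℝ × ℝ ↦ weight (Real.tan y.2.2.2)) y :=
    (contDiff_weight (n := 0)).continuous.continuousAt.comp' htan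
  have hne : weight (Real.tan y.2.2.2) ≠ 0 := (weight_pos _).ne'
  unfold toProfile profileCurvature profileSlope profileHeight
  fun_prop (disch := positivity)

section Transfer

variable {a : ℝ} {S : Set ℝ}

lemma SolDOn.isIntegralCurveIn_toProfile {Φ W Ψ θ : ℝ → ℝ} (h : SolDOn a S Φ W Ψ θ)
    (hΦ : ∀ t ∈ S, 0 < Φ t) (hθ : ∀ t ∈ S, θ t ∈ Ioo (-(Real.pi / 2)) (Real.pi / 2)) :
    IsIntegralCurveIn (profileField a) profileDomain
      (fun t ↦ toProfile (Φ t, W t, Ψ t, θ t)) S := by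
  refine isIntegralCurveIn_profileField_iff.2 fun t ht ↦ ?_
  obtain ⟨hdΦ, hdW, hdΨ, hdθ⟩ := h t ht
  have hdx : HasDerivWithinAt (fun t ↦ Real.tan (θ t)) (clockRate (Real.tan (θ t))) S t :=
    ((Real.hasDerivAt_tan (Real.cos_pos_of_mem_Ioo (hθ t ht)).ne').comp_hasDerivWithinAt t
      hdθ).congr_deriv (inv_cos_sq_mul_cos_rpow (hθ t ht))
  rw [dPsi_eq_dPsiTan (hθ t ht)] at hdΨ
  exact ⟨div_pos (hΦ t ht) (pow_pos (weight_pos _) 3), hasDerivWithinAt_profileHeight hdx hdΦ,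
    hasDerivWithinAt_profileSlope hdx hdΦ hdW,
    hasDerivWithinAt_profileCurvature hdx hdΦ hdW hdΨ (hΦ t ht).ne', hdx⟩

lemma solDOn_ofProfile {γ : ℝ → ℝ × ℝ × ℝ × ℝ}
    (h : IsIntegralCurveIn (profileField a) profileDomain γ S) :
    SolDOn a S (fun t ↦ (ofProfile (γ t)).1) (fun t ↦ (ofProfile (γ t)).2.1)
      (fun t ↦ (ofProfile (γ t)).2.2.1) fun t ↦ (ofProfile (γ t)).2.2.2 := by
  intro t ht
  obtain ⟨hpos, hh, hp, hq, hx⟩ := isIntegralCurveIn_profileField_iff.1 h t ht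
  have hheight := hasDerivWithinAt_heightOfProfile (p := fun t ↦ (γ t).2.1) hx hh
  have hvelocity := hasDerivWithinAt_velocityOfProfile (p := fun t ↦ (γ t).2.1)
    (q := fun t ↦ (γ t).2.2.1) hx hh hp
  have hacceleration := hasDerivWithinAt_accelerationOfProfile (p := fun t ↦ (γ t).2.1)
    (q := fun t ↦ (γ t).2.2.1) hx hh hp hq hpos.ne'
  refine ⟨hheight, hvelocity, ?_, ?_⟩
  · refine hacceleration.congr_deriv ?_
    simp only [ofProfile]
    rw [dPsi_eq_dPsiTan (Real.arctan_mem_Ioo _), Real.tan_arctan]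
  · refine ((Real.hasDerivAt_arctan _).comp_hasDerivWithinAt t hx).congr_deriv ?_
    exact one_div_mul_clockRate (γ t).2.2.2

lemma profileHeight_le {x Φ : ℝ} (hΦ : 0 ≤ Φ) : profileHeight x Φ ≤ Φ :=
  div_le_self hΦ (one_le_pow₀ (one_le_weight x))

lemma SolDOn.touchesDown {τs : ℝ} (hτs : τs < 0) {Φ W Ψ θ : ℝ → ℝ}
    (h : SolDOn a (Ioc τs 0) Φ W Ψ θ) (hΦ : ∀ τ ∈ Ioc τs 0, 0 < Φ τ)
    (hθ : ∀ τ ∈ Ioc τs 0, θ τ ∈ Ioo (-(Real.pi / 2)) (Real.pi / 2))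
    (hzero : Tendsto Φ (𝓝[>] τs) (𝓝 0)) :
    TouchesDown a (toProfile (Φ 0, W 0, Ψ 0, θ 0)) := by
  have hγ := (h.isIntegralCurveIn_toProfile hΦ hθ).comp_neg
  rw [Set.neg_Ioc, neg_zero] at hγ
  have hneg : Tendsto Neg.neg (𝓝[<] (-τs)) (𝓝[>] τs) := by
    simpa using! tendsto_neg_nhdsLT_neg (a := τs)
  have hev : ∀ᶠ s in 𝓝[<] (-τs), s ∈ Ico 0 (-τs) := Ico_mem_nhdsLT (neg_pos.2 hτs)
  refine ⟨-τs, neg_pos.2 hτs, _, by simp, hγ, squeeze_zero' ?_ ?_ (hzero.comp hneg)⟩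
  · filter_upwards [hev] with s hs using (hγ.mapsTo hs).le
  · filter_upwards [hev] with s hs
    exact profileHeight_le (hΦ (-s) ⟨lt_neg_of_lt_neg hs.2, neg_nonpos.2 hs.1⟩).le

lemma tendsto_heightOfProfile_zero {γ : ℝ → ℝ × ℝ × ℝ × ℝ} {σ : ℝ} (hσ : 0 < σ)
    (h : IsIntegralCurveIn (-profileField a) profileDomain γ (Ico 0 σ))
    (h0 : Tendsto (fun s ↦ (γ s).1) (𝓝[<] σ) (𝓝 0)) :
    Tendsto (fun s ↦ heightOfProfile (γ s).2.2.2 (γ s).1) (𝓝[<] σ) (𝓝 0) := by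
  have hpos : ∀ s ∈ Ico 0 σ, 0 < (γ s).1 := h.mapsTo
  have hlim := h0.mul_const (weight (|(γ 0).2.2.2| + σ) ^ 3)
  rw [zero_mul] at hlim
  refine squeeze_zero' ?_ ?_ hlim
  · filter_upwards [Ico_mem_nhdsLT hσ] with s hs
    exact mul_nonneg (hpos s hs).le (pow_pos (weight_pos _) 3).le
  · filter_upwards [Ico_mem_nhdsLT hσ] with s hs
    refine mul_le_mul_of_nonneg_left (pow_le_pow_left₀ (weight_pos _).le ?_ 3) (hpos s hs).le
    exact weight_le_weight <|
      abs_position_le (convex_Ico 0 σ) Ico_subset_Icc_self ⟨le_rfl, hσ⟩ h hs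

lemma TouchesDown.exists_solDOn {y : ℝ × ℝ × ℝ × ℝ} (h : TouchesDown a (toProfile y))
    (hy : y.2.2.2 ∈ Ioo (-(Real.pi / 2)) (Real.pi / 2)) :
    ∃ τs < 0, ∃ Φ W Ψ θ : ℝ → ℝ, SolDOn a (Ioc τs 0) Φ W Ψ θ ∧
      (Φ 0, W 0, Ψ 0, θ 0) = y ∧ (∀ τ ∈ Ioc τs 0, 0 < Φ τ) ∧ Tendsto Φ (𝓝[>] τs) (𝓝 0) := by
  obtain ⟨σ, hσ, γ, hγ0, hγ, h0⟩ := h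
  have hrev := hγ.comp_neg
  rw [neg_neg, Set.neg_Ico, neg_zero] at hrev
  refine ⟨-σ, neg_lt_zero.2 hσ, _, _, _, _, solDOn_ofProfile hrev, ?_, fun τ hτ ↦ ?_, ?_⟩
  · rw [neg_zero, hγ0]
    exact ofProfile_toProfile hy
  · exact mul_pos (hrev.mapsTo hτ) (pow_pos (weight_pos _) 3)
  · have hneg : Tendsto Neg.neg (𝓝[>] (-σ)) (𝓝[<] σ) := by
      simpa using! tendsto_neg_nhdsGT_neg (a := σ)
    exact (tendsto_heightOfProfile_zero hσ hγ h0).comp hneg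

end Transfer

/-- the behaviour `Φ(τ) → 0` as `τ → τ*⁺` (touchdown in finite time) is stable
under small perturbations of the data at `τ = 0`. -/
theorem stability_touchdown (a : ℝ) (τs : ℝ) (hτs : τs < 0) (Φ W Ψ θ : ℝ → ℝ)
    (hsol : SolDOn a (Set.Ioc τs 0) Φ W Ψ θ)
    (hΦpos : ∀ τ ∈ Set.Ioc τs (0 : ℝ), 0 < Φ τ)
    (hθ : ∀ τ ∈ Set.Ioc τs (0 : ℝ), θ τ ∈ Set.Ioo (-(Real.pi / 2)) (Real.pi / 2))
    (hzero : Tendsto Φ (nhdsWithin τs (Set.Ioi τs)) (nhds 0)) :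
    ∃ δ > (0 : ℝ), ∀ Φ₀ W₀ Ψ₀ θ₀ : ℝ,
      dist ((Φ₀, W₀, Ψ₀, θ₀) : ℝ × ℝ × ℝ × ℝ) ((Φ 0, W 0, Ψ 0, θ 0) : ℝ × ℝ × ℝ × ℝ) < δ →
      0 < Φ₀ → θ₀ ∈ Set.Ioo (-(Real.pi / 2)) (Real.pi / 2) →
      ∃ τts : ℝ, τts < 0 ∧
        ∃ Φt Wt Ψt θt : ℝ → ℝ,
          SolDOn a (Set.Ioc τts 0) Φt Wt Ψt θt ∧
          Φt 0 = Φ₀ ∧ Wt 0 = W₀ ∧ Ψt 0 = Ψ₀ ∧ θt 0 = θ₀ ∧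
          (∀ τ ∈ Set.Ioc τts (0 : ℝ), 0 < Φt τ) ∧
          Tendsto Φt (nhdsWithin τts (Set.Ioi τts)) (nhds 0) := by
  have hopen := (isOpen_setOf_touchesDown a).mem_nhds (hsol.touchesDown hτs hΦpos hθ hzero)
  have hcont := continuousAt_toProfile (y := (Φ 0, W 0, Ψ 0, θ 0)) (hθ 0 ⟨hτs, le_rfl⟩)
  obtain ⟨δ, hδ, hball⟩ := Metric.eventually_nhds_iff.1 (hcont.eventually_mem hopen)
  refine ⟨δ, hδ, fun Φ₀ W₀ Ψ₀ θ₀ hdist _ hθ₀ ↦ ?_⟩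
  obtain ⟨τts, hτts, Φt, Wt, Ψt, θt, hsolt, heq, hpos, hlim⟩ :=
    (hball hdist).exists_solDOn hθ₀
  simp only [Prod.mk.injEq] at heq
  obtain ⟨hΦ0, hW0, hΨ0, hθ0⟩ := heq
  exact ⟨τts, hτts, Φt, Wt, Ψt, θt, hsolt, hΦ0, hW0, hΨ0, hθ0, hpos, hlim⟩
end

section
/- Let P₁(Y) = −Y⁵/60 + Y⁴/12 − Y³/6 and P₂(Y) = −Y³/6. Then: (i) P₁ and P₂ are strictly decreasing and positive on (−∞, 0); (ii) if λ ∈ ℝ satisfies 1 + 2λ > 0, then P₁(Y) + λ·P₂(Y) ≥ (1/2)·P₁(Y) for all Y < 0; (iii) if λ ∈ ℝ satisfies 1 + 2λ ≤ 0, then P₁(Y) + 2λ·P₂(Y) > −(4/5)·3^{3/2}·max{|1+2λ|^{5/2}, 1} for all Y < 0, and moreover P₁(Y) + 2λ·P₂(Y) ≥ 0 whenever Y ≤ 5/2 − √(25 − 40(1+2λ))/2. -/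
open Set

/-!
The sign of `P₁ + 2λP₂` is read off from the factorization
`P₁(Y) + 2λP₂(Y) = -Y³ (Y² - 5Y + 10(1 + 2λ)) / 60`: on `Y ≤ 0` it is nonnegative wherever the
quadratic factor is, in particular to the left of the smaller root of that factor. For the lower
bound, put `y = -Y`, drop the positive term `y⁴/12`, and bound `(y⁵ - 10|1 + 2λ|y³)/60` from below
by `-t⁵/90`, where `t² = 6|1 + 2λ|`; this is the weighted arithmetic-geometric mean inequality
`5y³t² ≤ 3y⁵ + 2t⁵`, with equality at the minimizer `y = t`.
-/

lemma five_mul_pow_three_mul_sq_le {R : Type*} [CommRing R] [LinearOrder R] [IsStrictOrderedRing R]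
    {y t : R} (hy : 0 ≤ y) (ht : 0 ≤ t) :
    5 * (y ^ 3 * t ^ 2) ≤ 3 * y ^ 5 + 2 * t ^ 5 := by
  have hfactor : 3 * y ^ 5 + 2 * t ^ 5 - 5 * (y ^ 3 * t ^ 2) =
      (y - t) ^ 2 * (3 * y ^ 3 + 6 * t * y ^ 2 + 4 * t ^ 2 * y + 2 * t ^ 3) := by ring
  have hnonneg : 0 ≤ (y - t) ^ 2 * (3 * y ^ 3 + 6 * t * y ^ 2 + 4 * t ^ 2 * y + 2 * t ^ 3) := by
    positivity
  exact sub_nonneg.mp (hfactor ▸ hnonneg)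

/-- The polynomial `P₁` arising from the term `ξ²` of the ODE `d³H/dξ³ + ξ² + a = H⁻³`, encoded as a
function: the triple integral from `0` of `-(Y - 1)²`. -/
noncomputable def P₁ (Y : ℝ) : ℝ := -Y ^ 5 / 60 + Y ^ 4 / 12 - Y ^ 3 / 6

/-- The polynomial `P₂` arising from the term `a` of the ODE `d³H/dξ³ + ξ² + a = H⁻³`, encoded as a
function: the triple integral from `0` of `-1`. -/
noncomputable def P₂ (Y : ℝ) : ℝ := -Y ^ 3 / 6

lemma hasDerivAt_P₁ (Y : ℝ) : HasDerivAt P₁ (-(Y ^ 2 * ((Y - 2) ^ 2 + 2)) / 12) Y := by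
  have h := (((hasDerivAt_pow 5 Y).neg.div_const 60).add ((hasDerivAt_pow 4 Y).div_const 12)).sub
    ((hasDerivAt_pow 3 Y).div_const 6)
  refine h.congr_deriv ?_
  push_cast
  ring

lemma deriv_P₁_neg {Y : ℝ} (hY : Y ≠ 0) : deriv P₁ Y < 0 := by
  rw [(hasDerivAt_P₁ Y).deriv, neg_div, neg_lt_zero]
  positivity

lemma strictAnti_P₁ : StrictAnti P₁ := by
  have hcont : Continuous P₁ :=
    continuous_iff_continuousAt.2 fun Y => (hasDerivAt_P₁ Y).continuousAt
  refine StrictAntiOn.Iic_union_Ici (a := 0)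
    (strictAntiOn_of_deriv_neg (convex_Iic 0) hcont.continuousOn fun Y hY => deriv_P₁_neg ?_)
    (strictAntiOn_of_deriv_neg (convex_Ici 0) hcont.continuousOn fun Y hY => deriv_P₁_neg ?_)
  · rw [interior_Iic] at hY
    exact hY.ne
  · rw [interior_Ici] at hY
    exact hY.ne'

lemma strictAnti_P₂ : StrictAnti P₂ := fun a b hab => by
  have hcube : a ^ 3 < b ^ 3 := Odd.strictMono_pow (by decide) hab
  unfold P₂
  linarith

lemma P₁_pos_iff {Y : ℝ} : 0 < P₁ Y ↔ Y < 0 := by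
  simpa [P₁] using strictAnti_P₁.lt_iff_gt (a := 0) (b := Y)

lemma P₂_pos_iff {Y : ℝ} : 0 < P₂ Y ↔ Y < 0 := by
  simpa [P₂] using strictAnti_P₂.lt_iff_gt (a := 0) (b := Y)

lemma P₁_add_two_mul_P₂_eq (lam Y : ℝ) :
    P₁ Y + 2 * lam * P₂ Y = (-Y) ^ 3 * (Y ^ 2 - 5 * Y + 10 * (1 + 2 * lam)) / 60 := by
  unfold P₁ P₂
  ring

lemma P₁_add_two_mul_P₂_nonneg {lam Y : ℝ} (hY : Y ≤ 0)
    (hquad : 0 ≤ Y ^ 2 - 5 * Y + 10 * (1 + 2 * lam)) : 0 ≤ P₁ Y + 2 * lam * P₂ Y := by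
  have hY' : 0 ≤ -Y := neg_nonneg.2 hY
  rw [P₁_add_two_mul_P₂_eq]
  positivity

lemma P₁_add_two_mul_P₂_nonneg_of_le_root {lam Y : ℝ} (hY : Y ≤ 0)
    (hroot : Y ≤ 5 / 2 - √(25 - 40 * (1 + 2 * lam)) / 2) : 0 ≤ P₁ Y + 2 * lam * P₂ Y := by
  have hdiscrim : 25 - 40 * (1 + 2 * lam) ≤ (5 - 2 * Y) ^ 2 :=
    (Real.sqrt_le_iff.1 (by linarith)).2
  exact P₁_add_two_mul_P₂_nonneg hY (by linarith)

lemma half_P₁_le_P₁_add_mul_P₂ {lam Y : ℝ} (hlam : 0 ≤ 1 + 2 * lam) (hY : Y ≤ 0) :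
    1 / 2 * P₁ Y ≤ P₁ Y + lam * P₂ Y := by
  have hquad : 0 ≤ Y ^ 2 - 5 * Y + 10 * (1 + 2 * lam) := by linarith [sq_nonneg Y]
  linarith [P₁_add_two_mul_P₂_nonneg hY hquad]

lemma neg_pow_five_div_lt_P₁_add_two_mul_P₂ {lam t Y : ℝ} (ht : 0 ≤ t)
    (hlam : -t ^ 2 ≤ 6 * (1 + 2 * lam)) (hY : Y < 0) :
    -(t ^ 5 / 90) < P₁ Y + 2 * lam * P₂ Y := by
  have hy : 0 < -Y := neg_pos.2 hY
  calc -(t ^ 5 / 90)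
    _ ≤ (3 * (-Y) ^ 5 - 5 * ((-Y) ^ 3 * t ^ 2)) / 180 := by
      linarith [five_mul_pow_three_mul_sq_le hy.le ht]
    _ = (-Y) ^ 3 * (Y ^ 2 + 5 / 3 * -t ^ 2) / 60 := by ring
    _ < (-Y) ^ 3 * (Y ^ 2 - 5 * Y + 10 * (1 + 2 * lam)) / 60 := by
      gcongr ?_ * ?_ / 60
      linarith
    _ = P₁ Y + 2 * lam * P₂ Y := (P₁_add_two_mul_P₂_eq lam Y).symm

lemma neg_rpow_div_lt_P₁_add_two_mul_P₂ (lam : ℝ) {Y : ℝ} (hY : Y < 0) :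
    -((6 * |1 + 2 * lam|) ^ ((5 : ℝ) / 2) / 90) < P₁ Y + 2 * lam * P₂ Y := by
  have hnonneg : 0 ≤ 6 * |1 + 2 * lam| := by positivity
  have hpow : (6 * |1 + 2 * lam|) ^ ((5 : ℝ) / 2) = √(6 * |1 + 2 * lam|) ^ 5 := by
    rw [Real.rpow_div_two_eq_sqrt 5 hnonneg]
    norm_cast
  rw [hpow]
  refine neg_pow_five_div_lt_P₁_add_two_mul_P₂ (Real.sqrt_nonneg _) ?_ hY
  rw [Real.sq_sqrt hnonneg]
  linarith [neg_abs_le (1 + 2 * lam)]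

lemma neg_mul_max_rpow_le_neg_rpow_div {x : ℝ} (hx : 0 ≤ x) :
    -(4 / 5) * (3 : ℝ) ^ ((3 : ℝ) / 2) * max (x ^ ((5 : ℝ) / 2)) 1 ≤
      -((6 * x) ^ ((5 : ℝ) / 2) / 90) := by
  have hsix : (6 : ℝ) ^ ((5 : ℝ) / 2) ≤ 6 ^ (3 : ℝ) := by gcongr <;> norm_num
  have hthree : (3 : ℝ) ≤ 3 ^ ((3 : ℝ) / 2) :=
    Real.self_le_rpow_of_one_le (by norm_num) (by norm_num)
  rw [neg_mul, neg_mul, neg_le_neg_iff]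
  calc (6 * x) ^ ((5 : ℝ) / 2) / 90
    _ = 6 ^ ((5 : ℝ) / 2) / 90 * x ^ ((5 : ℝ) / 2) := by
      rw [Real.mul_rpow (by norm_num) hx]
      ring
    _ ≤ 6 ^ (3 : ℝ) / 90 * x ^ ((5 : ℝ) / 2) := by gcongr
    _ = 4 / 5 * 3 * x ^ ((5 : ℝ) / 2) := by norm_num
    _ ≤ 4 / 5 * (3 : ℝ) ^ ((3 : ℝ) / 2) * max (x ^ ((5 : ℝ) / 2)) 1 := by
      gcongr
      exact le_max_left _ _

lemma five_half_sub_sqrt_half_nonpos {m : ℝ} (hm : m ≤ 0) : 5 / 2 - √(25 - 40 * m) / 2 ≤ 0 := by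
  have hsqrt : 5 ≤ √(25 - 40 * m) := Real.le_sqrt_of_sq_le (by linarith)
  linarith

theorem polynomial_inequalities_general :
    StrictAnti P₁ ∧ StrictAnti P₂ ∧ (∀ Y, 0 < P₁ Y ↔ Y < 0) ∧ (∀ Y, 0 < P₂ Y ↔ Y < 0) ∧
    (∀ lam, 0 ≤ 1 + 2 * lam → ∀ Y ≤ 0, 1 / 2 * P₁ Y ≤ P₁ Y + lam * P₂ Y) ∧
    (∀ lam, ∀ Y < 0, -((6 * |1 + 2 * lam|) ^ ((5 : ℝ) / 2) / 90) < P₁ Y + 2 * lam * P₂ Y) ∧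
    (∀ lam, ∀ Y ≤ 0, Y ≤ 5 / 2 - √(25 - 40 * (1 + 2 * lam)) / 2 → 0 ≤ P₁ Y + 2 * lam * P₂ Y) :=
  ⟨strictAnti_P₁, strictAnti_P₂, fun _ => P₁_pos_iff, fun _ => P₂_pos_iff,
    fun _ hlam _ => half_P₁_le_P₁_add_mul_P₂ hlam,
    fun lam _ => neg_rpow_div_lt_P₁_add_two_mul_P₂ lam,
    fun _ _ => P₁_add_two_mul_P₂_nonneg_of_le_root⟩

/-- properties of the polynomials `P₁(Y) = -Y⁵/60 + Y⁴/12 - Y³/6` and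
`P₂(Y) = -Y³/6` on `(-∞, 0)`. -/
theorem polynomial_inequalities :
    (StrictAntiOn (fun Y : ℝ => -Y ^ 5 / 60 + Y ^ 4 / 12 - Y ^ 3 / 6) (Set.Iio 0)) ∧
    (StrictAntiOn (fun Y : ℝ => -Y ^ 3 / 6) (Set.Iio 0)) ∧
    (∀ Y : ℝ, Y < 0 → 0 < -Y ^ 5 / 60 + Y ^ 4 / 12 - Y ^ 3 / 6) ∧
    (∀ Y : ℝ, Y < 0 → 0 < -Y ^ 3 / 6) ∧
    (∀ lam : ℝ, 0 < 1 + 2 * lam → ∀ Y : ℝ, Y < 0 →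
      (1 / 2) * (-Y ^ 5 / 60 + Y ^ 4 / 12 - Y ^ 3 / 6) ≤
        (-Y ^ 5 / 60 + Y ^ 4 / 12 - Y ^ 3 / 6) + lam * (-Y ^ 3 / 6)) ∧
    (∀ lam : ℝ, 1 + 2 * lam ≤ 0 →
      (∀ Y : ℝ, Y < 0 →
        -(4 / 5) * (3 : ℝ) ^ ((3 : ℝ) / 2) * max (|1 + 2 * lam| ^ ((5 : ℝ) / 2)) 1 <
          (-Y ^ 5 / 60 + Y ^ 4 / 12 - Y ^ 3 / 6) + 2 * lam * (-Y ^ 3 / 6)) ∧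
      (∀ Y : ℝ, Y ≤ 5 / 2 - Real.sqrt (25 - 40 * (1 + 2 * lam)) / 2 →
        0 ≤ (-Y ^ 5 / 60 + Y ^ 4 / 12 - Y ^ 3 / 6) + 2 * lam * (-Y ^ 3 / 6))) := by
  obtain ⟨hanti₁, hanti₂, hpos₁, hpos₂, hhalf, hlower, hnonneg⟩ := polynomial_inequalities_general
  exact ⟨hanti₁.strictAntiOn _, hanti₂.strictAntiOn _, fun Y => (hpos₁ Y).2, fun Y => (hpos₂ Y).2,
    fun lam hlam Y hY => hhalf lam hlam.le Y hY.le, fun lam hlam =>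
      ⟨fun Y hY => (neg_mul_max_rpow_le_neg_rpow_div (abs_nonneg _)).trans_lt (hlower lam Y hY),
        fun Y hY => hnonneg lam Y (hY.trans (five_half_sub_sqrt_half_nonpos hlam)) hY⟩⟩
end

section
/- Fix a ∈ ℝ, ξ* ∈ ℝ and ξ** ∈ (ξ*, +∞]. Let H : (ξ*, ξ**) → ℝ be a three times continuously differentiable function with H(ξ) > 0 and H'''(ξ) = 1/H(ξ)³ − (ξ² + a) for all ξ ∈ (ξ*, ξ**). If liminf_{ξ→ξ*⁺} H(ξ) = 0, then lim_{ξ→ξ*⁺} H(ξ) = 0. -/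
/-!
A function on a right neighbourhood of `s` whose derivative is eventually of one sign at `s⁺` is
eventually monotone there, and an eventually monotone function is eventually of one sign. By
induction, a function with an eventually nonnegative derivative of some order `n ≥ 1` is eventually
monotone, hence has a limit in `EReal` at `s⁺`. If the derivative is only eventually at least `m`,
subtracting `m (x - s) ^ n / n!` reduces to the nonnegative case and does not affect the limit.
Since `1 / H ^ 3 > 0` and `ξ ^ 2 + a` is bounded near `ξ*`, this applies to the third derivative
of `H`, so the limit of `H` at `ξ*⁺` exists and is its `liminf`.
-/

open Filter Set

/-- `(H, H1, H2)` is a positive C³ solution of `H''' = 1/H³ - (ξ² + a)` on the set `s`. -/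
noncomputable def SolH (a : ℝ) (s : Set ℝ) (H H1 H2 : ℝ → ℝ) : Prop :=
  ∀ ξ ∈ s, 0 < H ξ ∧
    HasDerivWithinAt H (H1 ξ) s ξ ∧
    HasDerivWithinAt H1 (H2 ξ) s ξ ∧
    HasDerivWithinAt H2 (1 / (H ξ) ^ 3 - (ξ ^ 2 + a)) s ξ

open OrderDual
open scoped Topology

/-- `f` is monotone or antitone on some set of the filter `l`; the direction is left open. -/
def IsEventuallyMonotone {α β : Type*} [Preorder α] [Preorder β] (f : α → β) (l : Filter α) :
    Prop :=
  ∃ t ∈ l, MonotoneOn f t ∨ AntitoneOn f t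

theorem eventually_ge_or_eventually_le_of_monotoneOn {α β : Type*} [LinearOrder α]
    [TopologicalSpace α] [ClosedIciTopology α] [LinearOrder β] {f : α → β} {a : α} {t : Set α}
    (ht : t ∈ 𝓝[>] a) (hf : MonotoneOn f t) (c : β) :
    (∀ᶠ x in 𝓝[>] a, c ≤ f x) ∨ ∀ᶠ x in 𝓝[>] a, f x ≤ c := by
  by_cases hc : ∀ x ∈ t ∩ Ioi a, c ≤ f x
  · exact .inl (mem_of_superset (inter_mem ht self_mem_nhdsWithin) hc)
  · push Not at hc
    obtain ⟨b, ⟨hbt, hab⟩, hfb⟩ := hc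
    right
    filter_upwards [ht, Ioo_mem_nhdsGT hab] with x hxt hx
    exact (hf hxt hbt hx.2.le).trans hfb.le

namespace IsEventuallyMonotone

theorem monotone_comp {α β γ : Type*} [Preorder α] [Preorder β] [Preorder γ] {f : α → β}
    {g : β → γ} {l : Filter α} (hg : Monotone g) (hf : IsEventuallyMonotone f l) :
    IsEventuallyMonotone (g ∘ f) l :=
  let ⟨t, ht, hmono⟩ := hf
  ⟨t, ht, hmono.imp hg.comp_monotoneOn hg.comp_antitoneOn⟩

variable {α β : Type*} [LinearOrder α] [TopologicalSpace α] {a : α} {f : α → β}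

theorem eventually_ge_or_eventually_le [ClosedIciTopology α] [LinearOrder β]
    (hf : IsEventuallyMonotone f (𝓝[>] a)) (c : β) :
    (∀ᶠ x in 𝓝[>] a, c ≤ f x) ∨ ∀ᶠ x in 𝓝[>] a, f x ≤ c := by
  obtain ⟨t, ht, hmono | hanti⟩ := hf
  · exact eventually_ge_or_eventually_le_of_monotoneOn ht hmono c
  · exact (eventually_ge_or_eventually_le_of_monotoneOn ht hanti.dual_right (toDual c)).symm

theorem exists_tendsto [OrderTopology α] [DenselyOrdered α] [NoMaxOrder α]
    [CompleteLinearOrder β] [TopologicalSpace β] [OrderTopology β]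
    (hf : IsEventuallyMonotone f (𝓝[>] a)) : ∃ L, Tendsto f (𝓝[>] a) (𝓝 L) := by
  obtain ⟨t, ht, hmono⟩ := hf
  obtain ⟨b, hab, hbt⟩ := mem_nhdsGT_iff_exists_Ioo_subset.1 ht
  have hne : (Ioo a b).Nonempty := nonempty_Ioo.2 hab
  rcases hmono with hmono | hanti
  · exact ⟨_, (hmono.mono hbt).tendsto_nhdsWithin_Ioo_right hne (OrderBot.bddBelow _)⟩
  · exact ⟨_, (hanti.mono hbt).tendsto_nhdsWithin_Ioo_right hne (OrderTop.bddAbove _)⟩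

end IsEventuallyMonotone

theorem eventually_hasDerivAt_of_hasDerivWithinAt {𝕜 E : Type*} [NontriviallyNormedField 𝕜]
    [NormedAddCommGroup E] [NormedSpace 𝕜 E] {f f' : 𝕜 → E} {s u : Set 𝕜} {a : 𝕜} (hu : IsOpen u)
    (hs : s ∈ 𝓝[u] a) (hf : ∀ x ∈ s, HasDerivWithinAt f (f' x) s x) :
    ∀ᶠ x in 𝓝[u] a, HasDerivAt f (f' x) x := by
  filter_upwards [hs, eventually_mem_nhdsWithin_iff.2 hs, self_mem_nhdsWithin] with x hxs hsx hxu
  rw [hu.nhdsWithin_eq hxu] at hsx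
  exact (hf x hxs).hasDerivAt hsx

theorem isEventuallyMonotone_of_hasDerivAt {f f' : ℝ → ℝ} {s : ℝ}
    (hf : ∀ᶠ x in 𝓝[>] s, HasDerivAt f (f' x) x)
    (hf' : (∀ᶠ x in 𝓝[>] s, 0 ≤ f' x) ∨ ∀ᶠ x in 𝓝[>] s, f' x ≤ 0) :
    IsEventuallyMonotone f (𝓝[>] s) := by
  rcases hf' with hnonneg | hnonpos
  · obtain ⟨b, hsb, hb⟩ := mem_nhdsGT_iff_exists_Ioo_subset.1 (hf.and hnonneg)
    refine ⟨Ioo s b, Ioo_mem_nhdsGT hsb, .inl ?_⟩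
    exact monotoneOn_of_hasDerivWithinAt_nonneg (convex_Ioo s b)
      (fun x hx ↦ (hb hx).1.continuousAt.continuousWithinAt)
      (fun x hx ↦ (hb (interior_subset hx)).1.hasDerivWithinAt)
      (fun x hx ↦ (hb (interior_subset hx)).2)
  · obtain ⟨b, hsb, hb⟩ := mem_nhdsGT_iff_exists_Ioo_subset.1 (hf.and hnonpos)
    refine ⟨Ioo s b, Ioo_mem_nhdsGT hsb, .inr ?_⟩
    exact antitoneOn_of_hasDerivWithinAt_nonpos (convex_Ioo s b)
      (fun x hx ↦ (hb hx).1.continuousAt.continuousWithinAt)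
      (fun x hx ↦ (hb (interior_subset hx)).1.hasDerivWithinAt)
      (fun x hx ↦ (hb (interior_subset hx)).2)

theorem hasDerivAt_sub_pow_div_factorial {𝕜 : Type*} [NontriviallyNormedField 𝕜] [CharZero 𝕜]
    (s : 𝕜) (k : ℕ) (x : 𝕜) :
    HasDerivAt (fun y ↦ (y - s) ^ (k + 1) / (k + 1).factorial) ((x - s) ^ k / k.factorial) x := by
  have hpow := (((hasDerivAt_id x).sub_const s).pow (k + 1)).div_const ((k + 1).factorial : 𝕜)
  refine hpow.congr_deriv ?_
  rw [Nat.factorial_succ]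
  push_cast
  simp only [id]
  field_simp

theorem tendsto_coe_ereal_add {α : Type*} {l : Filter α} {f g : α → ℝ} {L : EReal} {r : ℝ}
    (hf : Tendsto (fun x ↦ (f x : EReal)) l (𝓝 L)) (hg : Tendsto g l (𝓝 r)) :
    Tendsto (fun x ↦ ((f x + g x : ℝ) : EReal)) l (𝓝 (L + r)) := by
  have hadd : ContinuousAt (fun p : EReal × EReal ↦ p.1 + p.2) (L, (r : EReal)) :=
    EReal.continuousAt_add (.inr (EReal.coe_ne_bot r)) (.inr (EReal.coe_ne_top r))
  exact hadd.tendsto.comp (hf.prodMk_nhds (EReal.tendsto_coe.2 hg))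

section IteratedPrimitive

variable {F : ℕ → ℝ → ℝ} {s : ℝ} {n : ℕ}

-- The family is indexed by primitives, with the derivative of highest order at index `0`, so that
-- the correction term `m * (x - s) ^ k / k!` involves no truncated subtraction.
theorem isEventuallyMonotone_of_iterated_hasDerivAt_nonneg
    (hF : ∀ k ≤ n, ∀ᶠ x in 𝓝[>] s, HasDerivAt (F (k + 1)) (F k x) x)
    (hnonneg : ∀ᶠ x in 𝓝[>] s, 0 ≤ F 0 x) : IsEventuallyMonotone (F (n + 1)) (𝓝[>] s) := by
  induction n with
  | zero => exact isEventuallyMonotone_of_hasDerivAt (hF 0 le_rfl) (.inl hnonneg)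
  | succ n ih =>
    have hmono : IsEventuallyMonotone (F (n + 1)) (𝓝[>] s) := ih fun k hk ↦ hF k (by lia)
    exact isEventuallyMonotone_of_hasDerivAt (hF (n + 1) le_rfl)
      (hmono.eventually_ge_or_eventually_le 0)

theorem tendsto_liminf_of_iterated_hasDerivAt
    (hF : ∀ k ≤ n, ∀ᶠ x in 𝓝[>] s, HasDerivAt (F (k + 1)) (F k x) x)
    (hbdd : (𝓝[>] s).IsBoundedUnder (· ≥ ·) (F 0)) :
    Tendsto (fun x ↦ (F (n + 1) x : EReal)) (𝓝[>] s)
      (𝓝 (liminf (fun x ↦ (F (n + 1) x : EReal)) (𝓝[>] s))) := by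
  obtain ⟨m, hm⟩ := hbdd.eventually_ge
  let correction (k : ℕ) (x : ℝ) : ℝ := m * ((x - s) ^ k / k.factorial)
  have hderiv : ∀ k ≤ n, ∀ᶠ x in 𝓝[>] s,
      HasDerivAt (F (k + 1) - correction (k + 1)) (F k x - correction k x) x := fun k hk ↦
    (hF k hk).mono fun x hx ↦ hx.sub ((hasDerivAt_sub_pow_div_factorial s k x).const_mul m)
  have hnonneg : ∀ᶠ x in 𝓝[>] s, 0 ≤ F 0 x - correction 0 x :=
    hm.mono fun x hx ↦ by simpa [correction] using hx
  have hmono : IsEventuallyMonotone (F (n + 1) - correction (n + 1)) (𝓝[>] s) :=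
    isEventuallyMonotone_of_iterated_hasDerivAt_nonneg (F := fun k ↦ F k - correction k)
      hderiv hnonneg
  obtain ⟨L, hL⟩ := (hmono.monotone_comp EReal.coe_strictMono.monotone).exists_tendsto
  have hcorrection : Tendsto (correction (n + 1)) (𝓝[>] s) (𝓝 0) := by
    have hcont : Continuous (correction (n + 1)) := by fun_prop
    exact (hcont.tendsto' s 0 (by simp [correction])).mono_left nhdsWithin_le_nhds
  have hlim : Tendsto (fun x ↦ (F (n + 1) x : EReal)) (𝓝[>] s) (𝓝 L) := by
    simpa using tendsto_coe_ereal_add hL hcorrection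
  rwa [hlim.liminf_eq]

end IteratedPrimitive

theorem SolH.isBoundedUnder_ge_third_deriv {a ξs : ℝ} {s : Set ℝ} {H H1 H2 : ℝ → ℝ}
    (hsol : SolH a s H H1 H2) (hs : s ∈ 𝓝[>] ξs) :
    (𝓝[>] ξs).IsBoundedUnder (· ≥ ·) fun ξ ↦ 1 / H ξ ^ 3 - (ξ ^ 2 + a) := by
  have hforcing : Tendsto (fun ξ : ℝ ↦ -(ξ ^ 2 + a)) (𝓝[>] ξs) (𝓝 (-(ξs ^ 2 + a))) :=
    tendsto_nhdsWithin_of_tendsto_nhds (Continuous.tendsto (by fun_prop) ξs)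
  refine hforcing.isBoundedUnder_ge.mono_ge ?_
  filter_upwards [hs] with ξ hξ
  have hH : 0 < 1 / H ξ ^ 3 := one_div_pos.2 (pow_pos (hsol ξ hξ).1 3)
  linarith

theorem liminf_zero_implies_tendsto_zero_general {a ξs : ℝ} {s : Set ℝ} (hs : s ∈ 𝓝[>] ξs)
    {H H1 H2 : ℝ → ℝ} (hsol : SolH a s H H1 H2) :
    Tendsto (fun ξ ↦ (H ξ : EReal)) (𝓝[>] ξs) (𝓝 (liminf (fun ξ ↦ (H ξ : EReal)) (𝓝[>] ξs))) := by
  let F : ℕ → ℝ → ℝ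
    | 0 => fun ξ ↦ 1 / H ξ ^ 3 - (ξ ^ 2 + a)
    | 1 => H2
    | 2 => H1
    | _ => H
  have hF : ∀ k ≤ 2, ∀ᶠ ξ in 𝓝[>] ξs, HasDerivAt (F (k + 1)) (F k ξ) ξ := by
    intro k hk
    refine eventually_hasDerivAt_of_hasDerivWithinAt isOpen_Ioi hs fun ξ hξ ↦ ?_
    obtain ⟨-, hH, hH1, hH2⟩ := hsol ξ hξ
    interval_cases k
    exacts [hH2, hH1, hH]
  exact tendsto_liminf_of_iterated_hasDerivAt hF (hsol.isBoundedUnder_ge_third_deriv hs)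

theorem setOf_lt_and_coe_lt_mem_nhdsGT {x : ℝ} {y : EReal} (hxy : (x : EReal) < y) :
    {z : ℝ | x < z ∧ (z : EReal) < y} ∈ 𝓝[>] x :=
  inter_mem self_mem_nhdsWithin <| nhdsWithin_le_nhds <|
    continuous_coe_real_ereal.continuousAt.eventually_lt_const hxy

/-- if `liminf H = 0` at the left endpoint `ξ*` of the domain, then in fact
`H → 0` as `ξ → ξ*⁺`. -/
theorem liminf_zero_implies_tendsto_zero (a ξs : ℝ) (ξe : EReal) (hlt : (ξs : EReal) < ξe)
    (H H1 H2 : ℝ → ℝ)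
    (hsol : SolH a {ξ : ℝ | ξs < ξ ∧ (ξ : EReal) < ξe} H H1 H2)
    (hliminf : Filter.liminf (fun ξ : ℝ => ((H ξ : ℝ) : EReal))
      (nhdsWithin ξs (Set.Ioi ξs)) = 0) :
    Tendsto H (nhdsWithin ξs (Set.Ioi ξs)) (nhds 0) := by
  have hlim := liminf_zero_implies_tendsto_zero_general (setOf_lt_and_coe_lt_mem_nhdsGT hlt) hsol
  rwa [hliminf, ← EReal.coe_zero, EReal.tendsto_coe] at hlim
end
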